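/- arXiv:2110.04645 — 2 statements merged into one kernel-verified Lean document; each statement's English description precedes it below -/
import Mathlib

section
/- Consider the episodic interaction process over K episodes with adapted action choices, and let {W_h^i ∈ R^S : 1 ≤ i ≤ K, 1 ≤ h ≤ H+1} and {u_h^i(s,a,N) ∈ R} satisfy: (i) W_h^i is measurable with respect to the samples collected up to the end of step h−1 of episode i; (ii) ||W_h^i||_∞ ≤ C_w; (iii) u_h^i(s,a,N) is measurable with respect to the samples up to the end of step h−1 of episode i together with a given positive integer N ∈ [K]; (iv) 0 ≤ u_h^i(s,a,N) ≤ C_u; (v) 0 ≤ Σ_{n=1}^{N_h^k(s,a)} u_h^{k_h^n(s,a)}(s,a,N) ≤ 2 for all k. Define X_i(s,a,h,N) = u_h^i(s,a,N) · (P_h^i − P_{h,s,a}) W_{h+1}^i · 1{(s_h^i, a_h^i) = (s,a)}. Then for any δ ∈ (0,1), there is a universal constant C > 0 such that with probability at least 1 − δ, simultaneously for all (k, h, s, a, N) ∈ [K] × [H] × S × A × [K]: |Σ_{i=1}^{k} X_i(s,a,h,N)| ≤ C · ( sqrt(C_u · log²(SAT/δ)) · sqrt( Σ_{n=1}^{N_h^k(s,a)}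 u_h^{k_h^n(s,a)}(s,a,N) · Var_{h,s,a}(W_{h+1}^{k_h^n(s,a)}) ) + (C_u·C_w + sqrt(C_u/N)·C_w) · log²(SAT/δ) ). -/
open MeasureTheory Finset

/-- A finite-horizon MDP with horizon `H`, non-stationary transition kernels `P h s a ·`,
and deterministic rewards `r h s a ∈ [0,1]`. -/
structure MDP (S A : Type) [Fintype S] [Fintype A] where
  H : ℕ
  P : ℕ → S → A → S → ℝ
  r : ℕ → S → A → ℝ
  H_pos : 1 ≤ H
  P_nonneg : ∀ h s a s', 0 ≤ P h s a s'
  P_sum_one : ∀ h s a, ∑ s', P h s a s' = 1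
  r_nonneg : ∀ h s a, 0 ≤ r h s a
  r_le_one : ∀ h s a, r h s a ≤ 1

namespace MDP

variable {S A : Type} [Fintype S] [Fintype A] [Nonempty S] [Nonempty A]

/-- Optimal Q-function, defined by backward induction on the remaining number of steps
(`Qstar` below instantiates the fuel as `H + 1 - h`, so that values at step `H + 1`
vanish and the Bellman optimality equation holds for `1 ≤ h ≤ H`). -/
noncomputable def QstarAux (M : MDP S A) : ℕ → ℕ → S → A → ℝ
  | 0, _, _, _ => 0
  | (fuel + 1), h, s, a =>
      M.r h s a + ∑ s' : S, M.P h s a s' *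
        (Finset.univ.sup' Finset.univ_nonempty fun a' => QstarAux M fuel (h + 1) s' a')

/-- The optimal Q-function `Q_h^⋆`. -/
noncomputable def Qstar (M : MDP S A) (h : ℕ) (s : S) (a : A) : ℝ :=
  QstarAux M (M.H + 1 - h) h s a

/-- The optimal value function `V_h^⋆`. -/
noncomputable def Vstar (M : MDP S A) (h : ℕ) (s : S) : ℝ :=
  Finset.univ.sup' Finset.univ_nonempty fun a => M.Qstar h s a

/-- Value function `V_h^π` of a deterministic policy `π`, by backward induction. -/
noncomputable def VpolAux (M : MDP S A) (π : ℕ → S → A) : ℕ → ℕ → S → ℝ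
  | 0, _, _ => 0
  | (fuel + 1), h, s =>
      M.r h s (π h s) + ∑ s' : S, M.P h s (π h s) s' * VpolAux M π fuel (h + 1) s'

/-- The value function `V_h^π` of a deterministic policy `π`. -/
noncomputable def Vpol (M : MDP S A) (π : ℕ → S → A) (h : ℕ) (s : S) : ℝ :=
  VpolAux M π (M.H + 1 - h) h s

/-- Conditional variance `Var_{h,s,a}(V) = P_{h,s,a}(V²) - (P_{h,s,a} V)²`. -/
noncomputable def varP (M : MDP S A) (h : ℕ) (s : S) (a : A) (V : S → ℝ) : ℝ :=
  (∑ s' : S, M.P h s a s' * (V s') ^ 2) - (∑ s' : S, M.P h s a s' * V s') ^ 2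

end MDP

/-- The Q-learning rate `η_n = (H+1)/(H+n)`. -/
noncomputable def lr (H n : ℕ) : ℝ := (H + 1 : ℝ) / (H + n)

/-- `η_n^N`: equal to `η_n ∏_{i=n+1}^N (1 - η_i)` for `1 ≤ n ≤ N` (hence `η_n` for `N = n`),
`0` for `N < n`, and `η_0^N = ∏_{i=1}^N (1 - η_i)` (which is `1` if `N = 0` and `0` otherwise,
since `1 - η_1 = 0`). -/
noncomputable def lrProd (H n N : ℕ) : ℝ :=
  if N < n then 0
  else (if n = 0 then 1 else lr H n) * ∏ i ∈ Finset.Icc (n + 1) N, (1 - lr H i)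

/-- The log factor `log(SAT/δ)` with `T = KH`. -/
noncomputable def iota (S A : Type) [Fintype S] [Fintype A] (K H : ℕ) (δ : ℝ) : ℝ :=
  Real.log ((Fintype.card S : ℝ) * (Fintype.card A) * (K * H) / δ)

/-- The trajectory `(s_h^k, a_h^k)` is generated by online interaction with the MDP `M`:
states and actions are adapted to the filtration `𝓕` (with time index `(k-1)H + h`
corresponding to step `h` of episode `k`), and conditionally on the history,
`s_{h+1}^k ∼ P_h(· | s_h^k, a_h^k)`. -/
def IsMDPTrajectory {S A : Type} [Fintype S] [Fintype A] [DecidableEq S]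
    [MeasurableSpace S] [MeasurableSpace A]
    {Ω : Type} [m0 : MeasurableSpace Ω] (μ : Measure Ω)
    (M : MDP S A) (K : ℕ) (𝓕 : Filtration ℕ m0)
    (st : ℕ → ℕ → Ω → S) (ac : ℕ → ℕ → Ω → A) : Prop :=
  (∀ k ∈ Finset.Icc 1 K, ∀ h ∈ Finset.Icc 1 (M.H + 1),
      Measurable[𝓕 ((k - 1) * M.H + h)] (st k h)) ∧
  (∀ k ∈ Finset.Icc 1 K, ∀ h ∈ Finset.Icc 1 M.H,
      Measurable[𝓕 ((k - 1) * M.H + h)] (ac k h)) ∧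
  (∀ k ∈ Finset.Icc 1 K, ∀ h ∈ Finset.Icc 1 M.H, ∀ s' : S,
      μ[(fun ω => if st k (h + 1) ω = s' then (1 : ℝ) else 0) | 𝓕 ((k - 1) * M.H + h)]
        =ᵐ[μ] fun ω => M.P h (st k h ω) (ac k h ω) s')

/-- `N_h^k(s,a)`: the number of episodes `j ∈ {1,…,k}` in which the pair `(s,a)` is
visited at step `h`. -/
def Nvisit {S A : Type} [DecidableEq S] [DecidableEq A]
    (st : ℕ → ℕ → S) (ac : ℕ → ℕ → A) (k h : ℕ) (s : S) (a : A) : ℕ :=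
  ((Finset.Icc 1 k).filter fun j => st j h = s ∧ ac j h = a).card

/-- `k_h^n(s,a)`: the index of the episode in which `(s,a)` is visited for the `n`-th
time at step `h` (the least `k` with `N_h^k(s,a) ≥ n`). -/
noncomputable def kvisit {S A : Type} [DecidableEq S] [DecidableEq A]
    (st : ℕ → ℕ → S) (ac : ℕ → ℕ → A) (n h : ℕ) (s : S) (a : A) : ℕ :=
  sInf {k | n ≤ Nvisit st ac k h s a}

/-!
For increments bounded by `1`, the inequality `exp x ≤ 1 + x + x ^ 2` makes `exp (∑ X_i - ⟨X⟩)` a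
supermartingale, so Chernoff's bound gives `|∑ X_i| < ⟨X⟩ / r + L r` outside probability `2 e^{-L}`
for each deterministic rate `r ≥ R` when the increments are bounded by `R`. The best rate depends on
the random `⟨X⟩`, but `⟨X⟩ ≤ n R²` confines it to a grid of `n + 1` multiples of `R`, and a union
bound over the grid yields Freedman's inequality.

For fixed `(h, s, a, N)` the `X_i` are martingale differences with
`⟨X⟩ = ∑ u_i² Var_{h,s,a}(W_{h+1}^i) 1{(s_h^i, a_h^i) = (s,a)} ≤ C_u ∑_n u_{k_n} Var(W_{k_n})`. With
`L = 6 log²(SAT/δ)` the union bound over all tuples costs at most `δ` as soon as `S ≥ 2`, because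
then `log (SAT/δ) ≥ 1/2`; for `S = 1` every `X_i` vanishes.
-/

section Freedman

variable {Ω : Type*} {m0 : MeasurableSpace Ω} {μ : Measure Ω}

lemma condExp_exp_le [IsProbabilityMeasure μ] {m : MeasurableSpace Ω} (hm : m ≤ m0) {X : Ω → ℝ}
    (hX : AEStronglyMeasurable[m0] X μ) (hbound : ∀ᵐ ω ∂μ, |X ω| ≤ 1) (hmean : μ[X | m] =ᵐ[μ] 0) :
    μ[fun ω => Real.exp (X ω) | m] ≤ᵐ[μ] fun ω => Real.exp (μ[fun ω => X ω ^ 2 | m] ω) := by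
  have hXint : Integrable X μ := .of_bound hX 1 hbound
  have hsq : Integrable (fun ω => X ω ^ 2) μ := by
    refine .of_bound (hX.pow 2) 1 ?_
    filter_upwards [hbound] with ω hω
    simpa using hω
  have hexp : Integrable (fun ω => Real.exp (X ω)) μ := by
    refine .of_bound (Real.continuous_exp.comp_aestronglyMeasurable hX) (Real.exp 1) ?_
    filter_upwards [hbound] with ω hω
    simpa using (abs_le.1 hω).2
  have htaylor : (fun ω => Real.exp (X ω)) ≤ᵐ[μ] (fun _ => (1 : ℝ)) + X + fun ω => X ω ^ 2 := by
    filter_upwards [hbound] with ω hω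
    have := (abs_le.1 (Real.abs_exp_sub_one_sub_id_le hω)).2
    simp only [Pi.add_apply]
    linarith
  filter_upwards [condExp_mono (m := m) hexp (((integrable_const 1).add hXint).add hsq) htaylor,
    condExp_add ((integrable_const (1 : ℝ)).add hXint) hsq m,
    condExp_add (integrable_const (1 : ℝ)) hXint m, hmean] with ω hle hsum hsum' hzero
  rw [hsum, Pi.add_apply, hsum', Pi.add_apply, hzero, condExp_const hm] at hle
  have := Real.add_one_le_exp (μ[fun ω => X ω ^ 2 | m] ω)
  simp only [Pi.zero_apply] at hle
  linarith

/-- The predictable quadratic variation `⟨X⟩_n = ∑_{i < n} E[X_i² | 𝓕_i]`; the increment `X_i` is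
revealed at time `i + 1`. -/
noncomputable def predictableVariation (μ : Measure Ω) (𝓕 : Filtration ℕ m0) (X : ℕ → Ω → ℝ)
    (n : ℕ) (ω : Ω) : ℝ :=
  ∑ i ∈ range n, (μ[fun ω' => X i ω' ^ 2 | 𝓕 i]) ω

/-- The first `n` terms of `X` are the increments of a martingale and are bounded by `R`; the
increment `X_i` is revealed at time `i + 1`. -/
structure IsBoundedMartingaleDiff (μ : Measure Ω) (𝓕 : Filtration ℕ m0) (X : ℕ → Ω → ℝ)
    (R : ℝ) (n : ℕ) : Prop where
  stronglyMeasurable : ∀ i < n, StronglyMeasurable[𝓕 (i + 1)] (X i)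
  ae_abs_le : ∀ i < n, ∀ᵐ ω ∂μ, |X i ω| ≤ R
  condExp_eq_zero : ∀ i < n, μ[X i | 𝓕 i] =ᵐ[μ] 0

lemma stronglyMeasurable_predictableVariation_succ (𝓕 : Filtration ℕ m0) (X : ℕ → Ω → ℝ) (n : ℕ) :
    StronglyMeasurable[𝓕 n] (predictableVariation μ 𝓕 X (n + 1)) :=
  Finset.stronglyMeasurable_fun_sum _ fun _ hi =>
    stronglyMeasurable_condExp.mono (𝓕.mono (Nat.lt_succ_iff.1 (mem_range.1 hi)))

lemma predictableVariation_nonneg (𝓕 : Filtration ℕ m0) (X : ℕ → Ω → ℝ) (n : ℕ) :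
    ∀ᵐ ω ∂μ, 0 ≤ predictableVariation μ 𝓕 X n ω := by
  have hterm : ∀ᵐ ω ∂μ, ∀ i, 0 ≤ (μ[fun ω' => X i ω' ^ 2 | 𝓕 i]) ω :=
    ae_all_iff.2 fun i => condExp_nonneg (ae_of_all μ fun ω => sq_nonneg (X i ω))
  filter_upwards [hterm] with ω hω
  exact sum_nonneg fun i _ => hω i

lemma predictableVariation_const_mul (𝓕 : Filtration ℕ m0) (X : ℕ → Ω → ℝ) (c : ℝ) (n : ℕ) :
    predictableVariation μ 𝓕 (fun i ω => c * X i ω) n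
      =ᵐ[μ] fun ω => c ^ 2 * predictableVariation μ 𝓕 X n ω := by
  have hterm : ∀ᵐ ω ∂μ, ∀ i, (μ[fun ω' => (c * X i ω') ^ 2 | 𝓕 i]) ω
      = c ^ 2 * (μ[fun ω' => X i ω' ^ 2 | 𝓕 i]) ω := by
    refine ae_all_iff.2 fun i => ?_
    simp_rw [mul_pow]
    exact condExp_smul (c ^ 2) (fun ω => X i ω ^ 2) (𝓕 i)
  filter_upwards [hterm] with ω hω
  simp_rw [predictableVariation, mul_sum, hω]

namespace IsBoundedMartingaleDiff

variable {𝓕 : Filtration ℕ m0} {X : ℕ → Ω → ℝ} {R L : ℝ} {n : ℕ}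

lemma of_le (hX : IsBoundedMartingaleDiff μ 𝓕 X R n) {k : ℕ} (hk : k ≤ n) :
    IsBoundedMartingaleDiff μ 𝓕 X R k where
  stronglyMeasurable i hi := hX.stronglyMeasurable i (hi.trans_le hk)
  ae_abs_le i hi := hX.ae_abs_le i (hi.trans_le hk)
  condExp_eq_zero i hi := hX.condExp_eq_zero i (hi.trans_le hk)

lemma const_mul (hX : IsBoundedMartingaleDiff μ 𝓕 X R n) (c : ℝ) :
    IsBoundedMartingaleDiff μ 𝓕 (fun i ω => c * X i ω) (|c| * R) n where
  stronglyMeasurable i hi := (hX.stronglyMeasurable i hi).const_mul c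
  ae_abs_le i hi := by
    filter_upwards [hX.ae_abs_le i hi] with ω hω
    rw [abs_mul]
    gcongr
  condExp_eq_zero i hi := by
    filter_upwards [condExp_smul (μ := μ) c (X i) (𝓕 i), hX.condExp_eq_zero i hi] with ω hω hzero
    exact hω.trans (by simp [hzero])

lemma aestronglyMeasurable (hX : IsBoundedMartingaleDiff μ 𝓕 X R n) {i : ℕ} (hi : i < n) :
    AEStronglyMeasurable (X i) μ :=
  ((hX.stronglyMeasurable i hi).mono (𝓕.le _)).aestronglyMeasurable

lemma stronglyMeasurable_sum (hX : IsBoundedMartingaleDiff μ 𝓕 X R n) :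
    StronglyMeasurable[𝓕 n] fun ω => ∑ i ∈ range n, X i ω :=
  Finset.stronglyMeasurable_fun_sum _ fun i hi =>
    (hX.stronglyMeasurable i (mem_range.1 hi)).mono (𝓕.mono (mem_range.1 hi))

lemma ae_abs_sum_le (hX : IsBoundedMartingaleDiff μ 𝓕 X R n) :
    ∀ᵐ ω ∂μ, |∑ i ∈ range n, X i ω| ≤ n * R := by
  have hterm : ∀ᵐ ω ∂μ, ∀ i ∈ range n, |X i ω| ≤ R :=
    (ae_ball_iff (range n).countable_toSet).2 fun i hi => hX.ae_abs_le i (mem_range.1 hi)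
  filter_upwards [hterm] with ω hω
  simpa using (abs_sum_le_sum_abs _ _).trans (sum_le_card_nsmul _ _ R hω)

lemma predictableVariation_le [IsProbabilityMeasure μ] (hX : IsBoundedMartingaleDiff μ 𝓕 X R n) :
    ∀ᵐ ω ∂μ, predictableVariation μ 𝓕 X n ω ≤ n * R ^ 2 := by
  have hterm : ∀ᵐ ω ∂μ, ∀ i ∈ range n, (μ[fun ω' => X i ω' ^ 2 | 𝓕 i]) ω ≤ R ^ 2 := by
    refine (ae_ball_iff (range n).countable_toSet).2 fun i hi => ?_
    have hsq : ∀ᵐ ω ∂μ, X i ω ^ 2 ≤ R ^ 2 := by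
      filter_upwards [hX.ae_abs_le i (mem_range.1 hi)] with ω hω
      exact sq_le_sq' (abs_le.1 hω).1 (abs_le.1 hω).2
    have hint : Integrable (fun ω => X i ω ^ 2) μ := by
      refine .of_bound ((hX.aestronglyMeasurable (mem_range.1 hi)).pow 2) (R ^ 2) ?_
      simpa using hsq
    have hmono := condExp_mono (m := 𝓕 i) hint (integrable_const (R ^ 2)) hsq
    rwa [condExp_const (𝓕.le i)] at hmono
  filter_upwards [hterm] with ω hω
  simpa [predictableVariation] using sum_le_card_nsmul _ _ (R ^ 2) hω

lemma integrable_exp_sub_predictableVariation [IsProbabilityMeasure μ]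
    (hX : IsBoundedMartingaleDiff μ 𝓕 X R n) :
    Integrable (fun ω => Real.exp (∑ i ∈ range n, X i ω - predictableVariation μ 𝓕 X n ω)) μ := by
  have hmeas : AEStronglyMeasurable
      (fun ω => ∑ i ∈ range n, X i ω - predictableVariation μ 𝓕 X n ω) μ :=
    ((hX.stronglyMeasurable_sum.mono (𝓕.le n)).sub <| Finset.stronglyMeasurable_fun_sum _
      fun i _ => stronglyMeasurable_condExp.mono (𝓕.le i)).aestronglyMeasurable
  refine .of_bound (Real.continuous_exp.comp_aestronglyMeasurable hmeas) (Real.exp (n * R)) ?_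
  filter_upwards [hX.ae_abs_sum_le, predictableVariation_nonneg 𝓕 X n] with ω hsum hvar
  rw [Real.norm_eq_abs, Real.abs_exp, Real.exp_le_exp]
  linarith [(abs_le.1 hsum).2]

lemma integral_exp_sub_predictableVariation_le_one [IsProbabilityMeasure μ]
    (hX : IsBoundedMartingaleDiff μ 𝓕 X 1 n) :
    ∫ ω, Real.exp (∑ i ∈ range n, X i ω - predictableVariation μ 𝓕 X n ω) ∂μ ≤ 1 := by
  induction n with
  | zero => simp [predictableVariation]
  | succ n ih =>
    have hXn := hX.of_le n.le_succ
    refine le_trans ?_ (ih hXn)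
    let past : Ω → ℝ := fun ω =>
      Real.exp (∑ i ∈ range n, X i ω - predictableVariation μ 𝓕 X (n + 1) ω)
    have hsplit : (fun ω => Real.exp (∑ i ∈ range (n + 1), X i ω
        - predictableVariation μ 𝓕 X (n + 1) ω)) = past * fun ω => Real.exp (X n ω) := by
      ext ω
      rw [Pi.mul_apply, ← Real.exp_add, sum_range_succ]
      ring_nf
    have hpast : StronglyMeasurable[𝓕 n] past :=
      Real.continuous_exp.comp_stronglyMeasurable
        (hXn.stronglyMeasurable_sum.sub (stronglyMeasurable_predictableVariation_succ 𝓕 X n))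
    have hXmeas := hX.aestronglyMeasurable n.lt_succ_self
    have hexp : Integrable (fun ω => Real.exp (X n ω)) μ := by
      refine .of_bound (Real.continuous_exp.comp_aestronglyMeasurable hXmeas) (Real.exp 1) ?_
      filter_upwards [hX.ae_abs_le n n.lt_succ_self] with ω hω
      simpa using (abs_le.1 hω).2
    have hint := hX.integrable_exp_sub_predictableVariation
    rw [hsplit] at hint ⊢
    rw [← integral_condExp (𝓕.le n)]
    refine integral_mono_ae integrable_condExp hXn.integrable_exp_sub_predictableVariation ?_
    filter_upwards [condExp_mul_of_stronglyMeasurable_left hpast hint hexp,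
      condExp_exp_le (𝓕.le n) hXmeas (hX.ae_abs_le n n.lt_succ_self)
        (hX.condExp_eq_zero n n.lt_succ_self)] with ω hpull hstep
    rw [hpull]
    calc past ω * μ[fun ω => Real.exp (X n ω) | 𝓕 n] ω
        ≤ past ω * Real.exp (μ[fun ω => X n ω ^ 2 | 𝓕 n] ω) := by gcongr
      _ = Real.exp (∑ i ∈ range n, X i ω - predictableVariation μ 𝓕 X n ω) := by
          rw [← Real.exp_add, predictableVariation, predictableVariation, sum_range_succ]
          ring_nf

lemma measureReal_sum_ge_le [IsProbabilityMeasure μ] (hX : IsBoundedMartingaleDiff μ 𝓕 X R n)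
    {r : ℝ} (hr : 0 < r) (hRr : R ≤ r) :
    μ.real {ω | predictableVariation μ 𝓕 X n ω / r + L * r ≤ ∑ i ∈ range n, X i ω}
      ≤ Real.exp (-L) := by
  have hscaled : IsBoundedMartingaleDiff μ 𝓕 (fun i ω => r⁻¹ * X i ω) 1 n := by
    refine ⟨(hX.const_mul r⁻¹).stronglyMeasurable, fun i hi => ?_,
      (hX.const_mul r⁻¹).condExp_eq_zero⟩
    filter_upwards [(hX.const_mul r⁻¹).ae_abs_le i hi] with ω hω
    refine hω.trans ?_
    rw [abs_of_pos (inv_pos.2 hr), inv_mul_le_one₀ hr]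
    exact hRr
  have hchernoff := ProbabilityTheory.measure_ge_le_exp_mul_mgf (t := 1) L zero_le_one
    (by simpa using hscaled.integrable_exp_sub_predictableVariation)
  have hmgf := hscaled.integral_exp_sub_predictableVariation_le_one
  simp only [ProbabilityTheory.mgf, neg_mul, one_mul] at hchernoff
  calc _ ≤ μ.real {ω | L ≤ ∑ i ∈ range n, r⁻¹ * X i ω
            - predictableVariation μ 𝓕 (fun i ω => r⁻¹ * X i ω) n ω} := by
        refine ENNReal.toReal_mono (measure_ne_top _ _) (measure_mono_ae ?_)
        filter_upwards [predictableVariation_const_mul 𝓕 X r⁻¹ n] with ω hω hle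
        change _ ≤ _
        rw [hω, ← mul_sum]
        have := mul_le_mul_of_nonneg_left hle (inv_pos.2 hr).le
        field_simp at this ⊢
        linarith
    _ ≤ Real.exp (-L) * 1 := hchernoff.trans (by gcongr)
    _ = Real.exp (-L) := mul_one _

lemma measureReal_abs_sum_ge_le [IsProbabilityMeasure μ] (hX : IsBoundedMartingaleDiff μ 𝓕 X R n)
    {r : ℝ} (hr : 0 < r) (hRr : R ≤ r) :
    μ.real {ω | predictableVariation μ 𝓕 X n ω / r + L * r ≤ |∑ i ∈ range n, X i ω|}
      ≤ 2 * Real.exp (-L) := by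
  have hneg : IsBoundedMartingaleDiff μ 𝓕 (fun i ω => -X i ω) R n := by
    simpa using hX.const_mul (-1)
  have hunion : {ω | predictableVariation μ 𝓕 X n ω / r + L * r ≤ |∑ i ∈ range n, X i ω|}
      ⊆ {ω | predictableVariation μ 𝓕 X n ω / r + L * r ≤ ∑ i ∈ range n, X i ω}
        ∪ {ω | predictableVariation μ 𝓕 (fun i ω => -X i ω) n ω / r + L * r
            ≤ ∑ i ∈ range n, -X i ω} := by
    intro ω hω
    simpa [predictableVariation, le_abs] using hω
  calc _ ≤ _ := measureReal_mono hunion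
    _ ≤ _ := measureReal_union_le _ _
    _ ≤ Real.exp (-L) + Real.exp (-L) :=
        add_le_add (hX.measureReal_sum_ge_le hr hRr) (hneg.measureReal_sum_ge_le hr hRr)
    _ = 2 * Real.exp (-L) := by ring

end IsBoundedMartingaleDiff

/-- The minimiser of `r ↦ V / r + L * r` is `√(V / L)`; rounding it up to a multiple of `R` costs at
most `L * R`. -/
lemma exists_grid_point_le {V R L : ℝ} {n : ℕ} (hV : 0 ≤ V) (hR : 0 < R) (hL : 1 ≤ L)
    (hVn : V ≤ n * R ^ 2) :
    ∃ j ∈ Icc 1 (n + 1), V / (j * R) + L * (j * R) ≤ 2 * √(V * L) + L * R := by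
  set t := √(V * L)
  have ht_sq : t * t = V * L := Real.mul_self_sqrt (by positivity)
  have hn : (n : ℝ) ≤ n ^ 2 := by exact_mod_cast Nat.le_self_pow two_ne_zero n
  have htn : t ≤ n * (L * R) := by
    refine Real.sqrt_le_iff.2 ⟨by positivity, ?_⟩
    calc V * L ≤ (n * R ^ 2) * L ^ 2 := by gcongr; exact le_self_pow₀ hL two_ne_zero
      _ ≤ (n ^ 2 * R ^ 2) * L ^ 2 := by gcongr
      _ = (n * (L * R)) ^ 2 := by ring
  set q := t / (L * R) with hq
  have hqR : L * (q * R) = t := by rw [hq]; field_simp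
  have hq_le : q ≤ (⌊q⌋₊ + 1 : ℕ) := by exact_mod_cast (Nat.lt_floor_add_one q).le
  have hle_q : ((⌊q⌋₊ + 1 : ℕ) : ℝ) ≤ q + 1 := by
    push_cast
    gcongr
    exact Nat.floor_le (by positivity)
  have hq_floor : ⌊q⌋₊ ≤ n := Nat.floor_le_of_le ((div_le_iff₀ (by positivity)).2 htn)
  refine ⟨⌊q⌋₊ + 1, mem_Icc.2 (by omega), ?_⟩
  have hfirst : V / ((⌊q⌋₊ + 1 : ℕ) * R) ≤ t := by
    rw [div_le_iff₀ (by positivity)]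
    calc V = t * (q * R) := by
          rw [hq]
          field_simp
          linarith
      _ ≤ t * ((⌊q⌋₊ + 1 : ℕ) * R) := by gcongr
  have hsecond : L * ((⌊q⌋₊ + 1 : ℕ) * R) ≤ t + L * R := by
    calc L * ((⌊q⌋₊ + 1 : ℕ) * R) ≤ L * ((q + 1) * R) := by gcongr
      _ = t + L * R := by rw [add_one_mul, mul_add, hqR]
  linarith

/-- Freedman's inequality; the factor `n + 1` is the price of optimising the rate over a grid. -/
theorem IsBoundedMartingaleDiff.measureReal_abs_sum_gt_le [IsProbabilityMeasure μ]
    {𝓕 : Filtration ℕ m0} {X : ℕ → Ω → ℝ} {R L : ℝ} {n : ℕ}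
    (hX : IsBoundedMartingaleDiff μ 𝓕 X R n) (hR : 0 ≤ R) (hL : 1 ≤ L) :
    μ.real {ω | 2 * √(predictableVariation μ 𝓕 X n ω * L) + L * R
        < |∑ i ∈ range n, X i ω|} ≤ 2 * (n + 1) * Real.exp (-L) := by
  rcases hR.eq_or_lt with rfl | hR
  · have hnull : μ.real {ω | 2 * √(predictableVariation μ 𝓕 X n ω * L) + L * 0
        < |∑ i ∈ range n, X i ω|} = 0 := by
      refine (measureReal_eq_zero_iff).2 (measure_eq_zero_iff_ae_notMem.2 ?_)
      filter_upwards [hX.ae_abs_sum_le] with ω hω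
      simp only [mul_zero, add_zero, not_lt] at hω ⊢
      exact hω.trans (by positivity)
    rw [hnull]
    positivity
  let tail : ℕ → Set Ω := fun j =>
    {ω | predictableVariation μ 𝓕 X n ω / (j * R) + L * (j * R) ≤ |∑ i ∈ range n, X i ω|}
  have hgrid : ∀ j ∈ Icc 1 (n + 1), μ.real (tail j) ≤ 2 * Real.exp (-L) := by
    intro j hj
    have hj : (1 : ℝ) ≤ j := by exact_mod_cast (mem_Icc.1 hj).1
    exact hX.measureReal_abs_sum_ge_le (by positivity) (le_mul_of_one_le_left hR.le hj)
  calc _ ≤ μ.real (⋃ j ∈ Icc 1 (n + 1), tail j) := by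
        refine ENNReal.toReal_mono (measure_ne_top _ _) (measure_mono_ae ?_)
        filter_upwards [predictableVariation_nonneg 𝓕 X n, hX.predictableVariation_le]
          with ω hV hVn hlarge
        obtain ⟨j, hj, hle⟩ := exists_grid_point_le hV hR hL hVn
        exact Set.mem_biUnion hj (hle.trans hlarge.le)
    _ ≤ ∑ j ∈ Icc 1 (n + 1), μ.real (tail j) := measureReal_biUnion_finset_le _ _
    _ ≤ ∑ j ∈ Icc 1 (n + 1), 2 * Real.exp (-L) := sum_le_sum hgrid
    _ = 2 * (n + 1) * Real.exp (-L) := by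
        simp only [sum_const, Nat.card_Icc, nsmul_eq_mul]
        push_cast
        ring

end Freedman

section VisitReindexing

variable {S A : Type} [DecidableEq S] [DecidableEq A] (st : ℕ → ℕ → S) (ac : ℕ → ℕ → A)
  (h : ℕ) (s : S) (a : A)

lemma Nvisit_succ (k : ℕ) :
    Nvisit st ac (k + 1) h s a
      = Nvisit st ac k h s a + if st (k + 1) h = s ∧ ac (k + 1) h = a then 1 else 0 := by
  simp only [Nvisit, card_filter, sum_Icc_succ_top (Nat.le_add_left 1 k)]

lemma Nvisit_mono : Monotone fun k => Nvisit st ac k h s a :=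
  monotone_nat_of_le_succ fun k => by simp [Nvisit_succ]

lemma kvisit_Nvisit_succ {k : ℕ} (hvisit : st (k + 1) h = s ∧ ac (k + 1) h = a) :
    kvisit st ac (Nvisit st ac k h s a + 1) h s a = k + 1 := by
  have hmem : k + 1 ∈ {j | Nvisit st ac k h s a + 1 ≤ Nvisit st ac j h s a} := by
    simp [Nvisit_succ, hvisit]
  refine le_antisymm (Nat.sInf_le hmem) (le_csInf ⟨_, hmem⟩ fun j hj => ?_)
  by_contra! hjk
  exact (Nat.lt_of_succ_le hj).not_ge (Nvisit_mono st ac h s a (Nat.lt_succ_iff.1 hjk))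

lemma sum_kvisit {E : Type*} [AddCommMonoid E] (f : ℕ → E) (k : ℕ) :
    ∑ n ∈ Icc 1 (Nvisit st ac k h s a), f (kvisit st ac n h s a)
      = ∑ i ∈ Icc 1 k, if st i h = s ∧ ac i h = a then f i else 0 := by
  induction k with
  | zero => simp [Nvisit]
  | succ k ih =>
    rw [sum_Icc_succ_top (Nat.le_add_left 1 k), ← ih, Nvisit_succ]
    split_ifs with hvisit
    · rw [sum_Icc_succ_top (Nat.le_add_left 1 _), kvisit_Nvisit_succ st ac h s a hvisit]
    · simp

end VisitReindexing

namespace MDP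

variable {S A : Type} [Fintype S] [Fintype A] (M : MDP S A) (h : ℕ) (s : S) (a : A)

/-- The expected next value `P_{h,s,a} V`. -/
def meanP (V : S → ℝ) : ℝ := ∑ s', M.P h s a s' * V s'

lemma abs_meanP_le {V : S → ℝ} {C : ℝ} (hV : ∀ s', |V s'| ≤ C) : |M.meanP h s a V| ≤ C :=
  calc |M.meanP h s a V| ≤ ∑ s', |M.P h s a s' * V s'| := abs_sum_le_sum_abs _ _
    _ ≤ ∑ s', M.P h s a s' * C := by
        refine sum_le_sum fun s' _ => ?_
        rw [abs_mul, abs_of_nonneg (M.P_nonneg h s a s')]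
        exact mul_le_mul_of_nonneg_left (hV s') (M.P_nonneg h s a s')
    _ = C := by rw [← sum_mul, M.P_sum_one, one_mul]

lemma abs_mul_sub_meanP_le {V : S → ℝ} {c B C : ℝ} (hV : ∀ s', |V s'| ≤ C) (hc : |c| ≤ B)
    (s' : S) : |c * (V s' - M.meanP h s a V)| ≤ 2 * (B * C) := by
  have hdev : |V s' - M.meanP h s a V| ≤ C + C :=
    (abs_sub _ _).trans (add_le_add (hV s') (M.abs_meanP_le h s a hV))
  calc |c * (V s' - M.meanP h s a V)| ≤ B * (C + C) := by
        rw [abs_mul]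
        exact mul_le_mul hc hdev (abs_nonneg _) ((abs_nonneg _).trans hc)
    _ = 2 * (B * C) := by ring

lemma meanP_const_mul (c : ℝ) (V : S → ℝ) :
    M.meanP h s a (fun s' => c * V s') = c * M.meanP h s a V := by
  simp only [meanP, mul_sum, mul_left_comm]

lemma meanP_sub_meanP (V : S → ℝ) :
    M.meanP h s a (fun s' => V s' - M.meanP h s a V) = 0 := by
  simp [meanP, mul_sub, sum_sub_distrib, ← sum_mul, M.P_sum_one]

lemma meanP_sub_meanP_sq (V : S → ℝ) :
    M.meanP h s a (fun s' => (V s' - M.meanP h s a V) ^ 2) = M.varP h s a V := by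
  have hexpand : ∀ s', M.P h s a s' * (V s' - M.meanP h s a V) ^ 2
      = M.P h s a s' * V s' ^ 2 - 2 * M.meanP h s a V * (M.P h s a s' * V s')
        + M.P h s a s' * M.meanP h s a V ^ 2 := fun s' => by ring
  rw [meanP, sum_congr rfl fun s' _ => hexpand s', sum_add_distrib, sum_sub_distrib, ← mul_sum,
    ← sum_mul, M.P_sum_one]
  simp only [varP, meanP]
  ring

lemma varP_nonneg (V : S → ℝ) : 0 ≤ M.varP h s a V := by
  rw [← meanP_sub_meanP_sq]
  exact sum_nonneg fun s' _ => mul_nonneg (M.P_nonneg h s a s') (sq_nonneg _)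

lemma meanP_eq_of_subsingleton [Subsingleton S] (V : S → ℝ) (s' : S) :
    M.meanP h s a V = V s' := by
  have hconst : V = fun _ => V s' := funext fun _ => congrArg V (Subsingleton.elim _ _)
  rw [hconst, meanP, ← sum_mul, M.P_sum_one, one_mul]

end MDP

/-- The history up to step `h` of each episode: the episode with (1-based) index `i + 1` has
reached step `h` at time `i * H + h`. -/
def stepFiltration {Ω : Type*} {m0 : MeasurableSpace Ω} (𝓕 : Filtration ℕ m0) (H h : ℕ) :
    Filtration ℕ m0 where
  seq i := 𝓕 (i * H + h)
  mono' _ _ hij := 𝓕.mono (by gcongr)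
  le' _ := 𝓕.le _

lemma measurable_apply_of_countable {Ω S E : Type*} {_ : MeasurableSpace Ω} [MeasurableSpace E]
    [Countable S] [MeasurableSpace S] [MeasurableSingletonClass S] {f : Ω → S → E}
    (hf : ∀ s, Measurable fun ω => f ω s) {B : Ω → S} (hB : Measurable B) :
    Measurable fun ω => f ω (B ω) :=
  (measurable_from_prod_countable_right hf : Measurable fun x : S × Ω => f x.2 x.1).comp
    (hB.prodMk measurable_id)

lemma condExp_apply_of_condLaw {Ω S : Type*} [Fintype S] [DecidableEq S] [MeasurableSpace S]
    [MeasurableSingletonClass S] {m m0 : MeasurableSpace Ω} {μ : Measure Ω} [IsFiniteMeasure μ]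
    {B : Ω → S} (hB : Measurable B) {p : Ω → S → ℝ}
    (hp : ∀ s, μ[fun ω => if B ω = s then (1 : ℝ) else 0 | m] =ᵐ[μ] fun ω => p ω s)
    {G : Ω → S → ℝ} (hG : ∀ s, StronglyMeasurable[m] fun ω => G ω s)
    (hGint : ∀ s, Integrable (fun ω => G ω s) μ) :
    μ[fun ω => G ω (B ω) | m] =ᵐ[μ] fun ω => ∑ s, p ω s * G ω s := by
  let atom : S → Ω → ℝ := fun s ω => if B ω = s then 1 else 0
  have hatom (s : S) : Measurable (atom s) :=
    .ite (hB (measurableSet_singleton s)) measurable_const measurable_const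
  have hatom_le (s : S) (ω : Ω) : ‖atom s ω‖ ≤ 1 := by
    dsimp only [atom]
    split_ifs <;> simp
  have hint (s : S) : Integrable ((fun ω => G ω s) * atom s) μ :=
    (hGint s).mul_bdd (hatom s).aestronglyMeasurable (ae_of_all _ (hatom_le s))
  have hsplit : (fun ω => G ω (B ω)) = ∑ s, (fun ω => G ω s) * atom s := by
    ext ω
    simp [atom]
  have hpull : ∀ᵐ ω ∂μ, ∀ s, μ[(fun ω => G ω s) * atom s | m] ω = G ω s * μ[atom s | m] ω :=
    ae_all_iff.2 fun s => condExp_mul_of_stronglyMeasurable_left (hG s) (hint s)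
      (.of_bound (hatom s).aestronglyMeasurable 1 (ae_of_all _ (hatom_le s)))
  rw [hsplit]
  filter_upwards [condExp_finsetSum (m := m) (fun s _ => hint s), hpull, ae_all_iff.2 hp]
    with ω hsum hω hpω
  rw [hsum, Finset.sum_apply]
  exact sum_congr rfl fun s _ => by rw [hω, hpω, mul_comm]

section VisitIncrements

variable {S A : Type} [Fintype S] [Fintype A] [DecidableEq S] [DecidableEq A]
  {Ω : Type} (M : MDP S A) (st : ℕ → ℕ → Ω → S) (ac : ℕ → ℕ → Ω → A)
  (V : ℕ → Ω → S → ℝ) (v : ℕ → Ω → ℝ) (h : ℕ) (s : S) (a : A)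

/-- The weighted one-step error `X_i = v_i (P_h^i - P_{h,s,a}) V_i 1{(s_h^i, a_h^i) = (s,a)}` of
episode `i`; in the paper `V_i = W_{h+1}^i` and `v_i = u_h^i(s,a,N)`. -/
noncomputable def visitIncrement (i : ℕ) (ω : Ω) : ℝ :=
  v i ω * ((V i ω (st i (h + 1) ω) - M.meanP h s a (V i ω))
    * (if st i h ω = s ∧ ac i h ω = a then (1 : ℝ) else 0))

/-- The weighted variance `∑_{n ≤ N_h^k(s,a)} v_{k_n} Var_{h,s,a}(V_{k_n})` over the visits of
`(s,a)` at step `h`, where `k_n = k_h^n(s,a)`. -/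
noncomputable def visitVariance (k : ℕ) (ω : Ω) : ℝ :=
  ∑ n ∈ Icc 1 (Nvisit (fun k' h' => st k' h' ω) (fun k' h' => ac k' h' ω) k h s a),
    v (kvisit (fun k' h' => st k' h' ω) (fun k' h' => ac k' h' ω) n h s a) ω
      * M.varP h s a (V (kvisit (fun k' h' => st k' h' ω) (fun k' h' => ac k' h' ω) n h s a) ω)

variable {M st ac V v h s a}

lemma visitVariance_eq_sum_range (k : ℕ) (ω : Ω) :
    visitVariance M st ac V v h s a k ω = ∑ i ∈ range k,
      if st (i + 1) h ω = s ∧ ac (i + 1) h ω = a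
      then v (i + 1) ω * M.varP h s a (V (i + 1) ω) else 0 := by
  rw [visitVariance, sum_kvisit _ _ _ _ _ fun i => v i ω * M.varP h s a (V i ω),
    range_eq_Ico, sum_Ico_add' (fun i => if st i h ω = s ∧ ac i h ω = a
      then v i ω * M.varP h s a (V i ω) else 0)]
  rfl

lemma visitIncrement_eq_zero_of_subsingleton [Subsingleton S] (i : ℕ) (ω : Ω) :
    visitIncrement M st ac V v h s a i ω = 0 := by
  rw [visitIncrement, M.meanP_eq_of_subsingleton h s a _ (st i (h + 1) ω)]
  ring

lemma visitIncrement_pow_eq_ite {i p : ℕ} {ω : Ω} (hp : p ≠ 0) :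
    visitIncrement M st ac V v h s a i ω ^ p = if st i h ω = s ∧ ac i h ω = a
      then (v i ω * (V i ω (st i (h + 1) ω) - M.meanP h s a (V i ω))) ^ p else 0 := by
  rw [visitIncrement]
  split_ifs <;> simp [hp]

lemma abs_visitIncrement_le {i : ℕ} {ω : Ω} {Cw Cu : ℝ} (hV : ∀ s', |V i ω s'| ≤ Cw)
    (hv : |v i ω| ≤ Cu) :
    |visitIncrement M st ac V v h s a i ω| ≤ 2 * (Cu * Cw) := by
  have hdev := M.abs_mul_sub_meanP_le h s a hV hv (st i (h + 1) ω)
  rw [← pow_one (visitIncrement M st ac V v h s a i ω), visitIncrement_pow_eq_ite one_ne_zero,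
    pow_one]
  split_ifs
  · exact hdev
  · simpa using (abs_nonneg _).trans hdev

end VisitIncrements

namespace IsMDPTrajectory

variable {S A : Type} [Fintype S] [Fintype A] [DecidableEq S]
  [MeasurableSpace S] [MeasurableSingletonClass S] [MeasurableSpace A] [MeasurableSingletonClass A]
  {Ω : Type} {m0 : MeasurableSpace Ω} {μ : Measure Ω} {M : MDP S A} {K : ℕ} {𝓕 : Filtration ℕ m0}
  {st : ℕ → ℕ → Ω → S} {ac : ℕ → ℕ → Ω → A} {V : ℕ → Ω → S → ℝ} {v : ℕ → Ω → ℝ} {Cw Cu : ℝ}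
  {h i k : ℕ}

lemma measurableSet_visit (htraj : IsMDPTrajectory μ M K 𝓕 st ac) (hi : i ∈ Icc 1 K)
    (hh : h ∈ Icc 1 M.H) (s : S) (a : A) :
    MeasurableSet[𝓕 ((i - 1) * M.H + h)] {ω | st i h ω = s ∧ ac i h ω = a} :=
  (htraj.1 i hi h (Icc_subset_Icc_right M.H.le_succ hh) (measurableSet_singleton s)).inter
    (htraj.2.1 i hi h hh (measurableSet_singleton a))

variable [DecidableEq A]

lemma condExp_ite_visit [IsFiniteMeasure μ] (htraj : IsMDPTrajectory μ M K 𝓕 st ac)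
    (hi : i ∈ Icc 1 K) (hh : h ∈ Icc 1 M.H) (s : S) (a : A) {g : Ω → S → ℝ} {C : ℝ}
    (hg : ∀ s', Measurable[𝓕 ((i - 1) * M.H + h)] fun ω => g ω s') (hgC : ∀ ω s', |g ω s'| ≤ C) :
    μ[fun ω => if st i h ω = s ∧ ac i h ω = a then g ω (st i (h + 1) ω) else 0
        | 𝓕 ((i - 1) * M.H + h)]
      =ᵐ[μ] fun ω => if st i h ω = s ∧ ac i h ω = a then M.meanP h s a (g ω) else 0 := by
  have hnext : Measurable (st i (h + 1)) :=
    (htraj.1 i hi (h + 1) (by grind)).mono (𝓕.le _) le_rfl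
  let G : Ω → S → ℝ := fun ω s' => if st i h ω = s ∧ ac i h ω = a then g ω s' else 0
  have hG (s' : S) : StronglyMeasurable[𝓕 ((i - 1) * M.H + h)] fun ω => G ω s' :=
    ((hg s').ite (htraj.measurableSet_visit hi hh s a) measurable_const).stronglyMeasurable
  have hGint (s' : S) : Integrable (fun ω => G ω s') μ := by
    refine .of_bound ((hG s').mono (𝓕.le _)).aestronglyMeasurable C (ae_of_all _ fun ω => ?_)
    dsimp only [G]
    split_ifs
    · exact hgC ω s'
    · simpa using (abs_nonneg _).trans (hgC ω s')
  filter_upwards [condExp_apply_of_condLaw hnext (htraj.2.2 i hi h hh) hG hGint] with ω hω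
  rw [hω]
  dsimp only [G]
  split_ifs with hvisit
  · rw [hvisit.1, hvisit.2, MDP.meanP]
  · simp

lemma condExp_visitIncrement_pow [IsFiniteMeasure μ] (htraj : IsMDPTrajectory μ M K 𝓕 st ac)
    (hi : i ∈ Icc 1 K) (hh : h ∈ Icc 1 M.H) (s : S) (a : A)
    (hV : ∀ s', Measurable[𝓕 ((i - 1) * M.H + h)] fun ω => V i ω s')
    (hVC : ∀ ω s', |V i ω s'| ≤ Cw) (hv : Measurable[𝓕 ((i - 1) * M.H + h)] (v i))
    (hvC : ∀ ω, |v i ω| ≤ Cu) {p : ℕ} (hp : p ≠ 0) :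
    μ[fun ω => visitIncrement M st ac V v h s a i ω ^ p | 𝓕 ((i - 1) * M.H + h)]
      =ᵐ[μ] fun ω => if st i h ω = s ∧ ac i h ω = a
        then v i ω ^ p * M.meanP h s a (fun s' => (V i ω s' - M.meanP h s a (V i ω)) ^ p)
        else 0 := by
  have hmean : Measurable[𝓕 ((i - 1) * M.H + h)] fun ω => M.meanP h s a (V i ω) :=
    Finset.measurable_sum _ fun s' _ => (hV s').const_mul _
  simp_rw [visitIncrement_pow_eq_ite hp, ← M.meanP_const_mul, ← mul_pow]
  refine htraj.condExp_ite_visit hi hh s a (C := (2 * (Cu * Cw)) ^ p)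
    (g := fun ω s' => (v i ω * (V i ω s' - M.meanP h s a (V i ω))) ^ p)
    (fun s' => (hv.mul ((hV s').sub hmean)).pow_const p) fun ω s' => ?_
  rw [abs_pow]
  have := M.abs_mul_sub_meanP_le h s a (hVC ω) (hvC ω) s'
  gcongr

lemma measurable_visitIncrement (htraj : IsMDPTrajectory μ M K 𝓕 st ac)
    (hi : i ∈ Icc 1 K) (hh : h ∈ Icc 1 M.H) (s : S) (a : A)
    (hV : ∀ s', Measurable[𝓕 ((i - 1) * M.H + h)] fun ω => V i ω s')
    (hv : Measurable[𝓕 ((i - 1) * M.H + h)] (v i)) :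
    Measurable[𝓕 (i * M.H + h)] (visitIncrement M st ac V v h s a i) := by
  have hsucc : (i - 1) * M.H + M.H = i * M.H := by
    rw [← Nat.succ_mul, Nat.succ_eq_add_one, Nat.sub_add_cancel (mem_Icc.1 hi).1]
  have hpast : 𝓕 ((i - 1) * M.H + h) ≤ 𝓕 (i * M.H + h) := 𝓕.mono (by omega)
  have hnext : Measurable[𝓕 (i * M.H + h)] (st i (h + 1)) :=
    (htraj.1 i hi (h + 1) (by grind)).mono (𝓕.mono (by have := M.H_pos; omega)) le_rfl
  have hVmeas (s' : S) : Measurable[𝓕 (i * M.H + h)] fun ω => V i ω s' :=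
    (hV s').mono hpast le_rfl
  have hVnext : Measurable[𝓕 (i * M.H + h)] fun ω => V i ω (st i (h + 1) ω) :=
    measurable_apply_of_countable hVmeas hnext
  have hmean : Measurable[𝓕 (i * M.H + h)] fun ω => M.meanP h s a (V i ω) :=
    Finset.measurable_sum _ fun s' _ => (hVmeas s').const_mul _
  exact (hv.mono hpast le_rfl).mul ((hVnext.sub hmean).mul
    (measurable_const.ite (hpast _ (htraj.measurableSet_visit hi hh s a)) measurable_const))

lemma isBoundedMartingaleDiff_visitIncrement [IsFiniteMeasure μ]
    (htraj : IsMDPTrajectory μ M K 𝓕 st ac) (hh : h ∈ Icc 1 M.H) (s : S) (a : A)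
    (hV : ∀ i ∈ Icc 1 K, ∀ s', Measurable[𝓕 ((i - 1) * M.H + h)] fun ω => V i ω s')
    (hVC : ∀ i ω s', |V i ω s'| ≤ Cw)
    (hv : ∀ i ∈ Icc 1 K, Measurable[𝓕 ((i - 1) * M.H + h)] (v i)) (hvC : ∀ i ω, |v i ω| ≤ Cu) :
    IsBoundedMartingaleDiff μ (stepFiltration 𝓕 M.H h)
      (fun i => visitIncrement M st ac V v h s a (i + 1)) (2 * (Cu * Cw)) K where
  stronglyMeasurable i hi := by
    have hi : i + 1 ∈ Icc 1 K := by grind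
    exact (htraj.measurable_visitIncrement hi hh s a (hV _ hi) (hv _ hi)).stronglyMeasurable
  ae_abs_le i _ := ae_of_all _ fun ω =>
    abs_visitIncrement_le (hVC (i + 1) ω) (hvC (i + 1) ω)
  condExp_eq_zero i hi := by
    have hi : i + 1 ∈ Icc 1 K := by grind
    have := htraj.condExp_visitIncrement_pow hi hh s a (hV _ hi) (hVC _) (hv _ hi) (hvC _)
      one_ne_zero
    simp only [pow_one, MDP.meanP_sub_meanP, mul_zero, ite_self] at this
    exact this

lemma predictableVariation_visitIncrement_le [IsFiniteMeasure μ]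
    (htraj : IsMDPTrajectory μ M K 𝓕 st ac) (hh : h ∈ Icc 1 M.H) (s : S) (a : A)
    (hV : ∀ i ∈ Icc 1 K, ∀ s', Measurable[𝓕 ((i - 1) * M.H + h)] fun ω => V i ω s')
    (hVC : ∀ i ω s', |V i ω s'| ≤ Cw)
    (hv : ∀ i ∈ Icc 1 K, Measurable[𝓕 ((i - 1) * M.H + h)] (v i))
    (hvC : ∀ i ω, 0 ≤ v i ω ∧ v i ω ≤ Cu) (hk : k ≤ K) :
    ∀ᵐ ω ∂μ, predictableVariation μ (stepFiltration 𝓕 M.H h)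
      (fun i => visitIncrement M st ac V v h s a (i + 1)) k ω
        ≤ Cu * visitVariance M st ac V v h s a k ω := by
  have hterm : ∀ᵐ ω ∂μ, ∀ i ∈ range k,
      μ[fun ω => visitIncrement M st ac V v h s a (i + 1) ω ^ 2 | stepFiltration 𝓕 M.H h i] ω
        = if st (i + 1) h ω = s ∧ ac (i + 1) h ω = a
          then v (i + 1) ω ^ 2 * M.varP h s a (V (i + 1) ω) else 0 := by
    refine (ae_ball_iff (range k).countable_toSet).2 fun i hi => ?_
    have hi : i + 1 ∈ Icc 1 K := by grind
    have := htraj.condExp_visitIncrement_pow hi hh s a (hV _ hi) (hVC _) (hv _ hi)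
      (fun ω => (abs_of_nonneg (hvC _ ω).1).trans_le (hvC _ ω).2) two_ne_zero
    simp only [MDP.meanP_sub_meanP_sq] at this
    exact this
  filter_upwards [hterm] with ω hω
  rw [predictableVariation, sum_congr rfl hω, visitVariance_eq_sum_range, mul_sum]
  refine sum_le_sum fun i _ => ?_
  split_ifs
  · rw [sq, mul_assoc]
    exact mul_le_mul_of_nonneg_right (hvC _ ω).2
      (mul_nonneg (hvC _ ω).1 (M.varP_nonneg h s a _))
  · simp

lemma measureReal_abs_sum_visitIncrement_gt_le [IsProbabilityMeasure μ]
    (htraj : IsMDPTrajectory μ M K 𝓕 st ac) (hh : h ∈ Icc 1 M.H) (s : S) (a : A)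
    (hV : ∀ i ∈ Icc 1 K, ∀ s', Measurable[𝓕 ((i - 1) * M.H + h)] fun ω => V i ω s')
    (hVC : ∀ i ω s', |V i ω s'| ≤ Cw)
    (hv : ∀ i ∈ Icc 1 K, Measurable[𝓕 ((i - 1) * M.H + h)] (v i))
    (hvC : ∀ i ω, 0 ≤ v i ω ∧ v i ω ≤ Cu) (hk : k ≤ K) {l : ℝ} (hl : 1 ≤ 6 * l ^ 2) :
    μ.real {ω | 12 * (√(Cu * l ^ 2) * √(visitVariance M st ac V v h s a k ω) + Cu * Cw * l ^ 2)
        < |∑ i ∈ Icc 1 k, visitIncrement M st ac V v h s a i ω|}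
      ≤ 2 * (k + 1) * Real.exp (-(6 * l ^ 2)) := by
  have hvabs (i : ℕ) (ω : Ω) : |v i ω| ≤ Cu := (abs_of_nonneg (hvC i ω).1).trans_le (hvC i ω).2
  obtain ⟨ω₀⟩ := nonempty_of_isProbabilityMeasure μ
  have hCu : 0 ≤ Cu := (hvC 0 ω₀).1.trans (hvC 0 ω₀).2
  have hCw : 0 ≤ Cw := (abs_nonneg _).trans (hVC 0 ω₀ (st 0 0 ω₀))
  have hfreedman := ((htraj.isBoundedMartingaleDiff_visitIncrement hh s a hV hVC hv hvabs).of_le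
    hk).measureReal_abs_sum_gt_le (by positivity) hl
  refine le_trans (ENNReal.toReal_mono (measure_ne_top _ _) (measure_mono_ae ?_)) hfreedman
  filter_upwards [htraj.predictableVariation_visitIncrement_le hh s a hV hVC hv hvC hk]
    with ω hvar hlarge
  refine lt_of_le_of_lt ?_ (hlarge.trans_eq ?_)
  · set Q := visitVariance M st ac V v h s a k ω
    have hsqrt : √(predictableVariation μ (stepFiltration 𝓕 M.H h)
        (fun i => visitIncrement M st ac V v h s a (i + 1)) k ω * (6 * l ^ 2))
          ≤ 6 * (√(Cu * l ^ 2) * √Q) :=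
      calc _ ≤ √(Cu * Q * (6 * l ^ 2)) := by gcongr
        _ = √6 * (√(Cu * l ^ 2) * √Q) := by
            rw [← Real.sqrt_mul (by positivity), ← Real.sqrt_mul (by positivity)]
            ring_nf
        _ ≤ 6 * (√(Cu * l ^ 2) * √Q) := by
            gcongr
            exact Real.sqrt_le_iff.2 (by norm_num)
    linarith
  · rw [range_eq_Ico, sum_Ico_add' fun i => visitIncrement M st ac V v h s a i ω]
    rfl

end IsMDPTrajectory

lemma one_sub_card_mul_le_measureReal {Ω ι : Type*} {m0 : MeasurableSpace Ω} {μ : Measure Ω}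
    [IsProbabilityMeasure μ] {I : Finset ι} {G : ι → Set Ω} {ε : ℝ}
    (hG : ∀ i ∈ I, μ.real (G i)ᶜ ≤ ε) : 1 - #I * ε ≤ μ.real {ω | ∀ i ∈ I, ω ∈ G i} := by
  have hcover : Set.univ ⊆ {ω | ∀ i ∈ I, ω ∈ G i} ∪ ⋃ i ∈ I, (G i)ᶜ := by
    intro ω _
    by_cases hω : ∀ i ∈ I, ω ∈ G i
    · exact .inl hω
    · exact .inr (by simpa using hω)
  have hunion : 1 ≤ μ.real {ω | ∀ i ∈ I, ω ∈ G i} + ∑ i ∈ I, μ.real (G i)ᶜ :=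
    calc (1 : ℝ) = μ.real Set.univ := probReal_univ.symm
      _ ≤ _ := measureReal_mono hcover
      _ ≤ _ := measureReal_union_le _ _
      _ ≤ _ := by gcongr; exact measureReal_biUnion_finset_le _ _
  have hsum : ∑ i ∈ I, μ.real (G i)ᶜ ≤ #I * ε := by simpa using sum_le_card_nsmul I _ ε hG
  linarith

section LogFactor

variable {S A : Type} [Fintype S] [Fintype A] [Nonempty A] {K H : ℕ} {δ : ℝ}

lemma exp_neg_iota [Nonempty S] (hH : 1 ≤ H) (hK : 1 ≤ K) (hδ : 0 < δ) :
    Real.exp (-iota S A K H δ) = δ / (Fintype.card S * Fintype.card A * (K * H)) := by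
  rw [iota, ← Real.log_inv, Real.exp_log (by positivity), inv_div]

variable [Nontrivial S]

lemma two_mul_le_card_mul (hH : 1 ≤ H) :
    2 * K ≤ Fintype.card S * Fintype.card A * (K * H) := by
  have hS : 2 ≤ Fintype.card S := Fintype.one_lt_card
  have hA : 1 ≤ Fintype.card A := Fintype.card_pos
  calc 2 * K = 2 * 1 * (K * 1) := by ring
    _ ≤ Fintype.card S * Fintype.card A * (K * H) := by gcongr

lemma half_le_iota (hH : 1 ≤ H) (hK : 1 ≤ K) (hδ : 0 < δ) (hδ1 : δ ≤ 1) :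
    1 / 2 ≤ iota S A K H δ := by
  have hcard : (2 : ℝ) ≤ Fintype.card S * Fintype.card A * (K * H) := by
    exact_mod_cast le_trans (by omega) (two_mul_le_card_mul (S := S) (A := A) (K := K) hH)
  calc (1 / 2 : ℝ) ≤ Real.log 2 := by linarith [Real.log_two_gt_d9]
    _ ≤ iota S A K H δ :=
      Real.log_le_log two_pos (hcard.trans (le_div_self (by positivity) hδ hδ1))

lemma card_mul_exp_neg_iota_sq_le (hH : 1 ≤ H) (hK : 1 ≤ K) (hδ : 0 < δ) (hδ1 : δ ≤ 1) {n : ℕ}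
    (hn : n ≤ K) :
    (K * (H * (Fintype.card S * (Fintype.card A * n))) : ℝ)
      * (2 * (K + 1) * Real.exp (-(6 * iota S A K H δ ^ 2))) ≤ δ := by
  have hι := half_le_iota (S := S) (A := A) hH hK hδ hδ1
  have hexponent : 3 * iota S A K H δ ≤ 6 * iota S A K H δ ^ 2 := by nlinarith
  have hK' : (1 : ℝ) ≤ K := by exact_mod_cast hK
  set x : ℝ := Fintype.card S * Fintype.card A * (K * H) with hx
  have hKx : 2 * (K : ℝ) ≤ x := by
    rw [hx]
    exact_mod_cast two_mul_le_card_mul hH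
  have hxpos : 0 < x := by linarith
  calc _ ≤ (K * (H * (Fintype.card S * (Fintype.card A * K))) : ℝ)
        * (2 * (K + K) * Real.exp (-(3 * iota S A K H δ))) := by gcongr
    _ = x * (2 * K) ^ 2 * Real.exp (-iota S A K H δ) ^ 3 := by
        rw [hx, ← Real.exp_nat_mul]
        push_cast
        ring_nf
    _ ≤ x * x ^ 2 * Real.exp (-iota S A K H δ) ^ 3 := by gcongr
    _ = δ ^ 3 := by
        rw [exp_neg_iota hH hK hδ, ← hx]
        field_simp
    _ ≤ δ := pow_le_of_le_one hδ.le hδ1 three_ne_zero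

end LogFactor

theorem freedman_union_bound_visit_indexed_general {S A : Type} [Fintype S] [Fintype A]
    [DecidableEq S] [DecidableEq A] [MeasurableSpace S] [MeasurableSingletonClass S]
    [MeasurableSpace A] [MeasurableSingletonClass A] {M : MDP S A} {K : ℕ} {Ω : Type}
    {m0 : MeasurableSpace Ω} {μ : Measure Ω} [IsProbabilityMeasure μ] {𝓕 : Filtration ℕ m0}
    {st : ℕ → ℕ → Ω → S} {ac : ℕ → ℕ → Ω → A} {ι : Type*} {J : Finset ι}
    {W : ℕ → ℕ → Ω → S → ℝ} {u : ℕ → ℕ → S → A → ι → Ω → ℝ} {Cw Cu δ : ℝ}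
    (hδ : 0 < δ) (hδ1 : δ ≤ 1) (hK : 1 ≤ K) (hJ : #J ≤ K)
    (htraj : IsMDPTrajectory μ M K 𝓕 st ac)
    (hW : ∀ i ∈ Icc 1 K, ∀ h ∈ Icc 1 M.H, ∀ s',
      Measurable[𝓕 ((i - 1) * M.H + h)] fun ω => W (h + 1) i ω s')
    (hWC : ∀ h i ω s', |W h i ω s'| ≤ Cw)
    (hu : ∀ i ∈ Icc 1 K, ∀ h ∈ Icc 1 M.H, ∀ s a, ∀ j ∈ J,
      Measurable[𝓕 ((i - 1) * M.H + h)] (u h i s a j))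
    (huC : ∀ h i s a j ω, 0 ≤ u h i s a j ω ∧ u h i s a j ω ≤ Cu) :
    1 - δ ≤ μ.real {ω | ∀ k ∈ Icc 1 K, ∀ h ∈ Icc 1 M.H, ∀ s a, ∀ j ∈ J,
      |∑ i ∈ Icc 1 k, visitIncrement M st ac (W (h + 1)) (fun i => u h i s a j) h s a i ω|
        ≤ 12 * (√(Cu * iota S A K M.H δ ^ 2)
            * √(visitVariance M st ac (W (h + 1)) (fun i => u h i s a j) h s a k ω)
          + Cu * Cw * iota S A K M.H δ ^ 2)} := by
  obtain ⟨ω₀⟩ := nonempty_of_isProbabilityMeasure μ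
  have : Nonempty A := ⟨ac 0 0 ω₀⟩
  have hCw : 0 ≤ Cw := (abs_nonneg _).trans (hWC 0 0 ω₀ (st 0 0 ω₀))
  have hCu (s : S) (a : A) (j : ι) : 0 ≤ Cu := (huC 0 0 s a j ω₀).1.trans (huC 0 0 s a j ω₀).2
  rcases subsingleton_or_nontrivial S with _ | _
  · refine (sub_le_self 1 hδ.le).trans_eq (probReal_univ (μ := μ)).symm |>.trans
      (measureReal_mono fun ω _ k _ h _ s a j _ => ?_)
    have := hCu s a j
    simp only [visitIncrement_eq_zero_of_subsingleton, sum_const_zero, abs_zero]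
    positivity
  let I := Icc 1 K ×ˢ Icc 1 M.H ×ˢ (univ : Finset S) ×ˢ (univ : Finset A) ×ˢ J
  have hmem {k h s a j} : (k, h, s, a, j) ∈ I ↔ k ∈ Icc 1 K ∧ h ∈ Icc 1 M.H ∧ j ∈ J := by
    simp only [I, mem_product, mem_univ, true_and]
  have hlevel : 1 ≤ 6 * iota S A K M.H δ ^ 2 := by
    nlinarith [half_le_iota (S := S) (A := A) M.H_pos hK hδ hδ1]
  let good : ℕ × ℕ × S × A × ι → Set Ω := fun (k, h, s, a, j) => {ω |
    |∑ i ∈ Icc 1 k, visitIncrement M st ac (W (h + 1)) (fun i => u h i s a j) h s a i ω|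
      ≤ 12 * (√(Cu * iota S A K M.H δ ^ 2)
          * √(visitVariance M st ac (W (h + 1)) (fun i => u h i s a j) h s a k ω)
        + Cu * Cw * iota S A K M.H δ ^ 2)}
  have hfail : ∀ x ∈ I, μ.real (good x)ᶜ
      ≤ 2 * (K + 1) * Real.exp (-(6 * iota S A K M.H δ ^ 2)) := by
    rintro ⟨k, h, s, a, j⟩ hx
    obtain ⟨hk, hh, hj⟩ := hmem.1 hx
    have hkK := (mem_Icc.1 hk).2
    have htail := htraj.measureReal_abs_sum_visitIncrement_gt_le hh s a (hW · · h hh) (hWC (h + 1))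
      (fun i hi => hu i hi h hh s a j hj) (fun i => huC h i s a j) hkK hlevel
    simp only [good, Set.compl_ofPred, not_le]
    exact htail.trans (by gcongr)
  have hcount : #I * (2 * (K + 1) * Real.exp (-(6 * iota S A K M.H δ ^ 2))) ≤ δ := by
    simpa [I] using card_mul_exp_neg_iota_sq_le (S := S) (A := A) M.H_pos hK hδ hδ1 hJ
  have hgood : 1 - δ ≤ μ.real {ω | ∀ x ∈ I, ω ∈ good x} :=
    (sub_le_sub_left hcount 1).trans (one_sub_card_mul_le_measureReal hfail)
  exact hgood.trans (measureReal_mono fun ω hω k hk h hh s a j hj =>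
    hω (k, h, s, a, j) (hmem.2 ⟨hk, hh, hj⟩))

/-- **Freedman-type concentration for visit-indexed martingales** (Lemma 7 of the paper).
Let `(s_h^k, a_h^k)` be an episodic trajectory generated by the MDP `M` (adapted to the
filtration `𝓕`, with time index `(i-1)H + h` corresponding to step `h` of episode `i`).
Let `W_h^i ∈ ℝ^S` be `𝓕((i-1)H + (h-1))`-measurable with `‖W_h^i‖_∞ ≤ C_w`, and let
`u_h^i(s,a,N)` be `𝓕((i-1)H + (h-1))`-measurable with `0 ≤ u_h^i(s,a,N) ≤ C_u` and
`0 ≤ ∑_{n=1}^{N_h^k(s,a)} u_h^{k_h^n(s,a)}(s,a,N) ≤ 2`.  Set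
`X_i(s,a,h,N) = u_h^i(s,a,N) (P_h^i - P_{h,s,a}) W_{h+1}^i 1{(s_h^i,a_h^i) = (s,a)}`.
Then there is a universal constant `C > 0` such that with probability at least `1 - δ`,
simultaneously for all `(k,h,s,a,N) ∈ [K] × [H] × S × A × [K]`,
`|∑_{i=1}^k X_i(s,a,h,N)| ≤ C (√(C_u log²(SAT/δ))
   √(∑_{n=1}^{N_h^k(s,a)} u_h^{k_h^n(s,a)}(s,a,N) Var_{h,s,a}(W_{h+1}^{k_h^n(s,a)}))
   + (C_u C_w + √(C_u/N) C_w) log²(SAT/δ))`. -/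
theorem freedman_union_bound_visit_indexed :
    ∃ C : ℝ, 0 < C ∧
      ∀ (S A : Type) [Fintype S] [Fintype A] [Nonempty S] [Nonempty A]
        [DecidableEq S] [DecidableEq A]
        [MeasurableSpace S] [MeasurableSingletonClass S]
        [MeasurableSpace A] [MeasurableSingletonClass A]
        (M : MDP S A) (K : ℕ)
        (Ω : Type) (m0 : MeasurableSpace Ω) (μ : Measure Ω)
        (𝓕 : Filtration ℕ m0)
        (st : ℕ → ℕ → Ω → S) (ac : ℕ → ℕ → Ω → A)
        (W : ℕ → ℕ → Ω → S → ℝ) (u : ℕ → ℕ → S → A → ℕ → Ω → ℝ)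
        (Cw Cu δ : ℝ),
        IsProbabilityMeasure μ → 0 < δ → δ < 1 → 1 ≤ K →
        IsMDPTrajectory μ M K 𝓕 st ac →
        (∀ i ∈ Icc 1 K, ∀ h ∈ Icc 1 (M.H + 1), ∀ s' : S,
          Measurable[𝓕 ((i - 1) * M.H + (h - 1))] (fun ω => W h i ω s')) →
        (∀ h i ω, ∀ s' : S, |W h i ω s'| ≤ Cw) →
        (∀ i ∈ Icc 1 K, ∀ h ∈ Icc 1 M.H, ∀ (s : S) (a : A) (Nval : ℕ),
          Measurable[𝓕 ((i - 1) * M.H + (h - 1))] (u h i s a Nval)) →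
        (∀ h i s a Nval ω, 0 ≤ u h i s a Nval ω ∧ u h i s a Nval ω ≤ Cu) →
        (∀ ω, ∀ k ∈ Icc 1 K, ∀ h ∈ Icc 1 M.H, ∀ (s : S) (a : A), ∀ Nval ∈ Icc 1 K,
          0 ≤ (∑ n ∈ Icc 1 (Nvisit (fun k' h' => st k' h' ω) (fun k' h' => ac k' h' ω) k h s a),
                u h (kvisit (fun k' h' => st k' h' ω) (fun k' h' => ac k' h' ω) n h s a)
                  s a Nval ω) ∧
          (∑ n ∈ Icc 1 (Nvisit (fun k' h' => st k' h' ω) (fun k' h' => ac k' h' ω) k h s a),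
              u h (kvisit (fun k' h' => st k' h' ω) (fun k' h' => ac k' h' ω) n h s a)
                s a Nval ω) ≤ 2) →
        1 - δ ≤ (μ {ω | ∀ k ∈ Icc 1 K, ∀ h ∈ Icc 1 M.H, ∀ (s : S) (a : A), ∀ Nval ∈ Icc 1 K,
            |∑ i ∈ Icc 1 k, u h i s a Nval ω
                * ((W (h + 1) i ω (st i (h + 1) ω)
                      - ∑ s', M.P h s a s' * W (h + 1) i ω s')
                    * (if st i h ω = s ∧ ac i h ω = a then (1 : ℝ) else 0))|
              ≤ C * (Real.sqrt (Cu * (iota S A K M.H δ) ^ 2)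
                  * Real.sqrt (∑ n ∈ Icc 1 (Nvisit (fun k' h' => st k' h' ω)
                        (fun k' h' => ac k' h' ω) k h s a),
                      u h (kvisit (fun k' h' => st k' h' ω) (fun k' h' => ac k' h' ω)
                            n h s a) s a Nval ω
                        * M.varP h s a (fun s' =>
                            W (h + 1) (kvisit (fun k' h' => st k' h' ω)
                              (fun k' h' => ac k' h' ω) n h s a) ω s'))
                + (Cu * Cw + Real.sqrt (Cu / Nval) * Cw)
                    * (iota S A K M.H δ) ^ 2)}).toReal := by
  refine ⟨12, by norm_num, fun S A _ _ _ _ _ _ _ _ _ _ M K Ω m0 μ 𝓕 st ac W u Cw Cu δ _ hδ hδ1 hK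
    htraj hW hWC hu huC _ => ?_⟩
  have hpast (i h : ℕ) : 𝓕 ((i - 1) * M.H + (h - 1)) ≤ 𝓕 ((i - 1) * M.H + h) := 𝓕.mono (by omega)
  refine (freedman_union_bound_visit_indexed_general (J := Icc 1 K) hδ hδ1.le hK (by simp) htraj
    (fun i hi h hh => hW i hi (h + 1) (by grind)) hWC
    (fun i hi h hh s a N _ => (hu i hi h hh s a N).mono (hpast i h) le_rfl) huC).trans
    (measureReal_mono fun ω hω k hk h hh s a N hN => (hω k hk h hh s a N hN).trans ?_)
  have hCw : 0 ≤ Cw := (abs_nonneg _).trans (hWC 0 0 ω s)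
  rw [visitVariance]
  gcongr
  exact le_add_of_nonneg_right (by positivity)
end

section
/- (Aggregate optimal-value variance bound.) In the setting of the Q-EarlySettled-Advantage algorithm, for any δ ∈ (0,1), there is a universal constant C > 0 such that with probability at least 1 − δ: Σ_{h=1}^{H} Σ_{k=1}^{K} sqrt( Var_{h, s_h^k, a_h^k}(V_{h+1}^*) / N_h^k(s_h^k, a_h^k) ) ≤ C · ( sqrt(H²·S·A·T·log(SAT/δ)) + H^4·S·A·log(SAT/δ) ), where (s_h^k, a_h^k) is the state-action pair encountered at step h of episode k. -/
open MeasureTheory Finset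

/-- The **Q-EarlySettled-Advantage** algorithm (Algorithms 1–2 of the paper), run for `K`
episodes on the MDP `M` with bonus constant `cb` and failure probability `δ`.
The fields record the trajectory `(s_h^k, a_h^k)`, the greedy policies `π^k`, the visit
counters, all Q/value estimates and auxiliary statistics, together with the initialization
and update equations defining the algorithm.  A quantity carrying episode index `k`
denotes its value at the *beginning* of episode `k` (`N k` is the counter at the *end*
of episode `k`, with `N 0 = 0`); `kvis n h s a` is the episode of the `n`-th visit of
`(s,a)` at step `h`. -/
structure QLAlg {S A : Type} [Fintype S] [Fintype A] [Nonempty S] [Nonempty A]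
    [DecidableEq S] [DecidableEq A] (M : MDP S A) (K : ℕ) (cb δ : ℝ) where
  /-- `s_h^k` : the state visited at step `h` of episode `k` -/
  st : ℕ → ℕ → S
  /-- `a_h^k` : the action taken at step `h` of episode `k` -/
  ac : ℕ → ℕ → A
  /-- `π^k` : the greedy policy executed during episode `k` -/
  pol : ℕ → ℕ → S → A
  /-- `N_h^k(s,a)` : number of visits of `(s,a)` at step `h` by the end of episode `k` -/
  N : ℕ → ℕ → S → A → ℕ
  /-- the combined Q-estimate `Q_h^k` -/
  Q : ℕ → ℕ → S → A → ℝ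
  /-- the Hoeffding-bonus optimistic estimate `Q_h^{UCB,k}` -/
  QUCB : ℕ → ℕ → S → A → ℝ
  /-- the pessimistic estimate `Q_h^{LCB,k}` -/
  QLCB : ℕ → ℕ → S → A → ℝ
  /-- the reference-advantage estimate `Q_h^{R,k}` -/
  QR : ℕ → ℕ → S → A → ℝ
  /-- `V_h^k` -/
  V : ℕ → ℕ → S → ℝ
  /-- `V_h^{LCB,k}` -/
  VLCB : ℕ → ℕ → S → ℝ
  /-- the reference value `V_h^{R,k}` -/
  VR : ℕ → ℕ → S → ℝ
  /-- the flag `u_ref^k` governing the final reference update -/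
  uref : ℕ → ℕ → S → Prop
  /-- running mean `μ_h^{ref,k}` of the reference -/
  muRef : ℕ → ℕ → S → A → ℝ
  /-- running second moment `σ_h^{ref,k}` of the reference -/
  sigRef : ℕ → ℕ → S → A → ℝ
  /-- running weighted mean `μ_h^{adv,k}` of the advantage -/
  muAdv : ℕ → ℕ → S → A → ℝ
  /-- running weighted second moment `σ_h^{adv,k}` of the advantage -/
  sigAdv : ℕ → ℕ → S → A → ℝ
  /-- the aggregated bonus `B_h^{R,k}` -/
  BR : ℕ → ℕ → S → A → ℝ
  /-- the bonus difference `δ_h^{R,k}` -/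
  dR : ℕ → ℕ → S → A → ℝ
  /-- `bR k h` : the exploration bonus `b_h^R` computed at step `h` of episode `k` -/
  bR : ℕ → ℕ → ℝ
  /-- `kvis n h s a = k_h^n(s,a)` : the episode of the `n`-th visit of `(s,a)` at step `h` -/
  kvis : ℕ → ℕ → S → A → ℕ
  greedy : ∀ k h s a, Q k h s a ≤ Q k h s (pol k h s)
  act_eq : ∀ k h, ac k h = pol k h (st k h)
  N_init : ∀ h s a, N 0 h s a = 0
  N_upd : ∀ k ∈ Icc 1 K, ∀ h ∈ Icc 1 M.H, ∀ s a,
    N k h s a = N (k - 1) h s a + (if s = st k h ∧ a = ac k h then 1 else 0)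
  Q_init : ∀ h ∈ Icc 1 M.H, ∀ s a, Q 1 h s a = M.H
  QUCB_init : ∀ h ∈ Icc 1 M.H, ∀ s a, QUCB 1 h s a = M.H
  QR_init : ∀ h ∈ Icc 1 M.H, ∀ s a, QR 1 h s a = M.H
  QLCB_init : ∀ h ∈ Icc 1 M.H, ∀ s a, QLCB 1 h s a = 0
  V_init : ∀ h ∈ Icc 1 M.H, ∀ s, V 1 h s = M.H
  VR_init : ∀ h ∈ Icc 1 M.H, ∀ s, VR 1 h s = M.H
  VLCB_init : ∀ h ∈ Icc 1 M.H, ∀ s, VLCB 1 h s = 0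
  uref_init : ∀ h s, uref 1 h s
  mom_init : ∀ h s a, muRef 1 h s a = 0 ∧ sigRef 1 h s a = 0 ∧ muAdv 1 h s a = 0 ∧
    sigAdv 1 h s a = 0 ∧ BR 1 h s a = 0 ∧ dR 1 h s a = 0
  V_terminal : ∀ k s, V k (M.H + 1) s = 0 ∧ VR k (M.H + 1) s = 0 ∧ VLCB k (M.H + 1) s = 0
  QUCB_upd : ∀ k ∈ Icc 1 K, ∀ h ∈ Icc 1 M.H, ∀ s a,
    QUCB (k + 1) h s a =
      if s = st k h ∧ a = ac k h then
        (1 - lr M.H (N k h s a)) * QUCB k h s a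
          + lr M.H (N k h s a) *
            (M.r h s a + V k (h + 1) (st k (h + 1))
              + cb * Real.sqrt ((M.H : ℝ) ^ 3 * iota S A K M.H δ / (N k h s a)))
      else QUCB k h s a
  QLCB_upd : ∀ k ∈ Icc 1 K, ∀ h ∈ Icc 1 M.H, ∀ s a,
    QLCB (k + 1) h s a =
      if s = st k h ∧ a = ac k h then
        (1 - lr M.H (N k h s a)) * QLCB k h s a
          + lr M.H (N k h s a) *
            (M.r h s a + VLCB k (h + 1) (st k (h + 1))
              - cb * Real.sqrt ((M.H : ℝ) ^ 3 * iota S A K M.H δ / (N k h s a)))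
      else QLCB k h s a
  muRef_upd : ∀ k ∈ Icc 1 K, ∀ h ∈ Icc 1 M.H, ∀ s a,
    muRef (k + 1) h s a =
      if s = st k h ∧ a = ac k h then
        (1 - 1 / (N k h s a : ℝ)) * muRef k h s a
          + (1 / (N k h s a : ℝ)) * VR k (h + 1) (st k (h + 1))
      else muRef k h s a
  sigRef_upd : ∀ k ∈ Icc 1 K, ∀ h ∈ Icc 1 M.H, ∀ s a,
    sigRef (k + 1) h s a =
      if s = st k h ∧ a = ac k h then
        (1 - 1 / (N k h s a : ℝ)) * sigRef k h s a
          + (1 / (N k h s a : ℝ)) * (VR k (h + 1) (st k (h + 1))) ^ 2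
      else sigRef k h s a
  muAdv_upd : ∀ k ∈ Icc 1 K, ∀ h ∈ Icc 1 M.H, ∀ s a,
    muAdv (k + 1) h s a =
      if s = st k h ∧ a = ac k h then
        (1 - lr M.H (N k h s a)) * muAdv k h s a
          + lr M.H (N k h s a) * (V k (h + 1) (st k (h + 1)) - VR k (h + 1) (st k (h + 1)))
      else muAdv k h s a
  sigAdv_upd : ∀ k ∈ Icc 1 K, ∀ h ∈ Icc 1 M.H, ∀ s a,
    sigAdv (k + 1) h s a =
      if s = st k h ∧ a = ac k h then
        (1 - lr M.H (N k h s a)) * sigAdv k h s a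
          + lr M.H (N k h s a) *
              (V k (h + 1) (st k (h + 1)) - VR k (h + 1) (st k (h + 1))) ^ 2
      else sigAdv k h s a
  BR_upd : ∀ k ∈ Icc 1 K, ∀ h ∈ Icc 1 M.H, ∀ s a,
    BR (k + 1) h s a =
      if s = st k h ∧ a = ac k h then
        cb * Real.sqrt (iota S A K M.H δ / (N k h s a)) *
          (Real.sqrt (sigRef (k + 1) h s a - (muRef (k + 1) h s a) ^ 2)
            + Real.sqrt (M.H) * Real.sqrt (sigAdv (k + 1) h s a - (muAdv (k + 1) h s a) ^ 2))
      else BR k h s a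
  dR_upd : ∀ k ∈ Icc 1 K, ∀ h ∈ Icc 1 M.H, ∀ s a,
    dR (k + 1) h s a =
      if s = st k h ∧ a = ac k h then BR (k + 1) h s a - BR k h s a else dR k h s a
  bR_def : ∀ k ∈ Icc 1 K, ∀ h ∈ Icc 1 M.H,
    bR k h = BR (k + 1) h (st k h) (ac k h)
      + (1 - lr M.H (N k h (st k h) (ac k h))) * dR (k + 1) h (st k h) (ac k h)
          / lr M.H (N k h (st k h) (ac k h))
      + cb * (M.H : ℝ) ^ 2 * iota S A K M.H δ
          / (N k h (st k h) (ac k h) : ℝ) ^ ((3 : ℝ) / 4)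
  QR_upd : ∀ k ∈ Icc 1 K, ∀ h ∈ Icc 1 M.H, ∀ s a,
    QR (k + 1) h s a =
      if s = st k h ∧ a = ac k h then
        (1 - lr M.H (N k h s a)) * QR k h s a
          + lr M.H (N k h s a) *
            (M.r h s a + V k (h + 1) (st k (h + 1)) - VR k (h + 1) (st k (h + 1))
              + muRef (k + 1) h s a + bR k h)
      else QR k h s a
  Q_upd : ∀ k ∈ Icc 1 K, ∀ h ∈ Icc 1 M.H, ∀ s a,
    Q (k + 1) h s a =
      if s = st k h ∧ a = ac k h then
        min (QR (k + 1) h s a) (min (QUCB (k + 1) h s a) (Q k h s a))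
      else Q k h s a
  V_upd : ∀ k ∈ Icc 1 K, ∀ h ∈ Icc 1 M.H, ∀ s,
    V (k + 1) h s =
      if s = st k h then Finset.univ.sup' Finset.univ_nonempty (fun a => Q (k + 1) h s a)
      else V k h s
  VLCB_upd : ∀ k ∈ Icc 1 K, ∀ h ∈ Icc 1 M.H, ∀ s,
    VLCB (k + 1) h s =
      if s = st k h then
        max (Finset.univ.sup' Finset.univ_nonempty (fun a => QLCB (k + 1) h s a)) (VLCB k h s)
      else VLCB k h s
  VR_upd_pos : ∀ k ∈ Icc 1 K, ∀ h ∈ Icc 1 M.H,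
    (1 < V (k + 1) h (st k h) - VLCB (k + 1) h (st k h) ∨ uref k h (st k h)) →
      VR (k + 1) h (st k h) = V (k + 1) h (st k h)
  VR_upd_neg : ∀ k ∈ Icc 1 K, ∀ h ∈ Icc 1 M.H,
    ¬(1 < V (k + 1) h (st k h) - VLCB (k + 1) h (st k h) ∨ uref k h (st k h)) →
      VR (k + 1) h (st k h) = VR k h (st k h)
  VR_upd_other : ∀ k ∈ Icc 1 K, ∀ h ∈ Icc 1 M.H, ∀ s, s ≠ st k h →
    VR (k + 1) h s = VR k h s
  uref_upd_pos : ∀ k ∈ Icc 1 K, ∀ h ∈ Icc 1 M.H,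
    1 < V (k + 1) h (st k h) - VLCB (k + 1) h (st k h) → uref (k + 1) h (st k h)
  uref_upd_neg : ∀ k ∈ Icc 1 K, ∀ h ∈ Icc 1 M.H,
    ¬(1 < V (k + 1) h (st k h) - VLCB (k + 1) h (st k h)) → ¬uref (k + 1) h (st k h)
  uref_upd_other : ∀ k ∈ Icc 1 K, ∀ h ∈ Icc 1 M.H, ∀ s, s ≠ st k h →
    (uref (k + 1) h s ↔ uref k h s)
  kvis_spec : ∀ h ∈ Icc 1 M.H, ∀ s a n, 1 ≤ n → n ≤ N K h s a →
    kvis n h s a ∈ Icc 1 K ∧ N (kvis n h s a) h s a = n ∧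
      st (kvis n h s a) h = s ∧ ac (kvis n h s a) h = a

/-!
The optimal values satisfy `P_{h,s,a} V⋆_{h+1} ≤ V⋆_h(s) ≤ H`, so along a trajectory the drift of
the potential `(H - V⋆_h(s_h))²` dominates the conditional variance `Var_{h,s_h,a_h}(V⋆_{h+1})`:
over one episode the variances sum to at most `H²` plus a sum of martingale increments. The
potential is a `2H`-Lipschitz function of `V⋆`, hence the conditional variances of the increments
are at most `4H²` times the variances being summed. An exponential supermartingale and Markov's
inequality therefore bound the increments in terms of those variances themselves, and with
probability at least `1 - δ` the total variance is at most `2H²K + 16H² log(1/δ)`. The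
Cauchy–Schwarz inequality combines this with `∑ 1 / N ≤ SA(1 + log K)` at each step `h`. For a
single state, where `log(SAT/δ)` need not dominate `1 + log K`, all variances vanish.
-/

/-- The variance of `f` under the weights `p`, written as `p(f²) - (p f)²` so that `MDP.varP`
is definitionally an instance of it. -/
def weightedVar {X : Type*} [Fintype X] (p f : X → ℝ) : ℝ :=
  ∑ x, p x * f x ^ 2 - (∑ x, p x * f x) ^ 2

section WeightedVar

variable {X : Type*} [Fintype X] {p : X → ℝ}

theorem sum_mul_mem_Icc (hp : p ∈ stdSimplex ℝ X) {f : X → ℝ} {a b : ℝ}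
    (hf : ∀ x, f x ∈ Set.Icc a b) : ∑ x, p x * f x ∈ Set.Icc a b :=
  (convex_Icc a b).sum_mem (fun x _ ↦ hp.1 x) hp.2 fun x _ ↦ hf x

theorem sum_mul_sub_sq_eq_weightedVar_add (hp : ∑ x, p x = 1) (f : X → ℝ) (c : ℝ) :
    ∑ x, p x * (f x - c) ^ 2 = weightedVar p f + (∑ x, p x * f x - c) ^ 2 := by
  have hexpand : ∀ x, p x * (f x - c) ^ 2 = p x * f x ^ 2 - 2 * c * (p x * f x) + c ^ 2 * p x :=
    fun x ↦ by ring
  simp_rw [hexpand, sum_add_distrib, sum_sub_distrib, ← mul_sum, hp, weightedVar]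
  ring

theorem weightedVar_le_sum_mul_sub_sq (hp : ∑ x, p x = 1) (f : X → ℝ) (c : ℝ) :
    weightedVar p f ≤ ∑ x, p x * (f x - c) ^ 2 := by
  rw [sum_mul_sub_sq_eq_weightedVar_add hp]
  exact le_add_of_nonneg_right (sq_nonneg _)

theorem weightedVar_eq_sum_mul_sub_mean_sq (hp : ∑ x, p x = 1) (f : X → ℝ) :
    weightedVar p f = ∑ x, p x * (f x - ∑ y, p y * f y) ^ 2 := by
  simp [sum_mul_sub_sq_eq_weightedVar_add hp]

theorem weightedVar_nonneg (hp : p ∈ stdSimplex ℝ X) (f : X → ℝ) : 0 ≤ weightedVar p f := by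
  rw [weightedVar_eq_sum_mul_sub_mean_sq hp.2]
  exact sum_nonneg fun x _ ↦ mul_nonneg (hp.1 x) (sq_nonneg _)

theorem weightedVar_of_subsingleton [Subsingleton X] (hp : ∑ x, p x = 1) (f : X → ℝ) :
    weightedVar p f = 0 := by
  have hmean : ∀ x, ∑ y, p y * f y = f x := fun x ↦ by
    rw [Fintype.sum_subsingleton _ x] at hp ⊢
    rw [hp, one_mul]
  rw [weightedVar_eq_sum_mul_sub_mean_sq hp]
  exact sum_eq_zero fun x _ ↦ by rw [hmean x]; ring

theorem weightedVar_comp_le_of_lipschitzOnWith (hp : p ∈ stdSimplex ℝ X) {f : X → ℝ} {g : ℝ → ℝ}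
    {L : NNReal} {a b : ℝ} (hg : LipschitzOnWith L g (Set.Icc a b))
    (hf : ∀ x, f x ∈ Set.Icc a b) :
    weightedVar p (fun x ↦ g (f x)) ≤ L ^ 2 * weightedVar p f := by
  set m := ∑ x, p x * f x
  have hlip : ∀ x, (g (f x) - g m) ^ 2 ≤ L ^ 2 * (f x - m) ^ 2 := fun x ↦ by
    rw [← mul_pow]
    refine sq_le_sq.mpr ?_
    simpa [Real.dist_eq, abs_mul] using hg.dist_le_mul _ (hf x) _ (sum_mul_mem_Icc hp hf)
  calc weightedVar p (fun x ↦ g (f x))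
      ≤ ∑ x, p x * (g (f x) - g m) ^ 2 := weightedVar_le_sum_mul_sub_sq hp.2 _ _
    _ ≤ ∑ x, p x * (L ^ 2 * (f x - m) ^ 2) := by gcongr with x; exacts [hp.1 x, hlip x]
    _ = L ^ 2 * weightedVar p f := by
        rw [weightedVar_eq_sum_mul_sub_mean_sq hp.2, mul_sum]
        exact sum_congr rfl fun x _ ↦ by ring

theorem sum_mul_exp_le_exp_sum_mul_sq (hp : p ∈ stdSimplex ℝ X) {f : X → ℝ}
    (hf : ∀ x, |f x| ≤ 1) (hmean : ∑ x, p x * f x = 0) :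
    ∑ x, p x * Real.exp (f x) ≤ Real.exp (∑ x, p x * f x ^ 2) := by
  have hquad : ∀ x, Real.exp (f x) ≤ 1 + f x + f x ^ 2 := fun x ↦ by
    linarith [(abs_le.mp (Real.abs_exp_sub_one_sub_id_le (hf x))).2]
  calc ∑ x, p x * Real.exp (f x)
      ≤ ∑ x, p x * (1 + f x + f x ^ 2) := by gcongr with x; exacts [hp.1 x, hquad x]
    _ = ∑ x, p x * f x ^ 2 + 1 := by
        simp_rw [mul_add, sum_add_distrib, hmean, mul_one, hp.2]
        ring
    _ ≤ Real.exp (∑ x, p x * f x ^ 2) := Real.add_one_le_exp _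

theorem lipschitzOnWith_sub_sq (B : NNReal) :
    LipschitzOnWith (2 * B) (fun x : ℝ ↦ (B - x) ^ 2) (Set.Icc 0 B) := by
  refine LipschitzOnWith.of_dist_le_mul fun x hx y hy ↦ ?_
  have hfactor : ((B : ℝ) - x) ^ 2 - (B - y) ^ 2 = (x + y - 2 * B) * (x - y) := by ring
  rw [Real.dist_eq, Real.dist_eq, hfactor, abs_mul, NNReal.coe_mul, NNReal.coe_ofNat]
  gcongr
  rw [abs_le]
  constructor <;> linarith [hx.1, hx.2, hy.1, hy.2]

/-- The squared gap `(B - f)²` has variance at most `4B² · weightedVar p f`, so its Bernstein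
compensator at rate `1 / (8B²)` is at most half of `weightedVar p f`. -/
theorem sum_mul_exp_sq_gap_le_one (hp : p ∈ stdSimplex ℝ X) {f : X → ℝ} {B : NNReal}
    (hB : 0 < B) (hf : ∀ x, f x ∈ Set.Icc 0 (B : ℝ)) :
    ∑ x, p x * Real.exp ((∑ y, p y * (B - f y) ^ 2 - (B - f x) ^ 2 - weightedVar p f / 2)
      / (8 * B ^ 2)) ≤ 1 := by
  set m := ∑ y, p y * ((B : ℝ) - f y) ^ 2
  set v := weightedVar p f
  set u : X → ℝ := fun x ↦ (m - (B - f x) ^ 2) / (8 * B ^ 2)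
  have hgap : ∀ x, ((B : ℝ) - f x) ^ 2 ∈ Set.Icc 0 ((B : ℝ) ^ 2) := fun x ↦
    ⟨sq_nonneg _, by nlinarith [(hf x).1, (hf x).2]⟩
  have hm : m ∈ Set.Icc 0 ((B : ℝ) ^ 2) := sum_mul_mem_Icc hp hgap
  have hu : ∀ x, |u x| ≤ 1 := fun x ↦ by
    rw [abs_div, abs_of_pos (by positivity : (0 : ℝ) < 8 * B ^ 2), div_le_one (by positivity),
      abs_le]
    constructor <;> linarith [hm.1, hm.2, (hgap x).1, (hgap x).2, sq_nonneg (B : ℝ)]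
  have hu_mean : ∑ x, p x * u x = 0 := by
    simp_rw [u, ← mul_div_assoc, ← sum_div, mul_sub, sum_sub_distrib, ← sum_mul, hp.2]
    simp [m]
  have hu_sq : ∑ x, p x * u x ^ 2 ≤ v / 2 / (8 * B ^ 2) := calc
    ∑ x, p x * u x ^ 2 = weightedVar p (fun x ↦ (B - f x) ^ 2) / (8 * B ^ 2) ^ 2 := by
        rw [weightedVar_eq_sum_mul_sub_mean_sq hp.2, sum_div]
        exact sum_congr rfl fun x _ ↦ by simp only [u, m]; ring
    _ ≤ (2 * B) ^ 2 * v / (8 * B ^ 2) ^ 2 := by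
        gcongr
        simpa using weightedVar_comp_le_of_lipschitzOnWith hp (lipschitzOnWith_sub_sq B) hf
    _ = v / 2 / (8 * B ^ 2) := by field_simp; ring
  calc ∑ x, p x * Real.exp ((m - (B - f x) ^ 2 - v / 2) / (8 * B ^ 2))
      = (∑ x, p x * Real.exp (u x)) * Real.exp (-(v / 2 / (8 * B ^ 2))) := by
        rw [sum_mul]
        refine sum_congr rfl fun x _ ↦ ?_
        rw [mul_assoc, ← Real.exp_add, sub_div, sub_eq_add_neg]
    _ ≤ Real.exp (v / 2 / (8 * B ^ 2)) * Real.exp (-(v / 2 / (8 * B ^ 2))) := by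
        gcongr
        exact (sum_mul_exp_le_exp_sum_mul_sq hp hu hu_mean).trans (Real.exp_le_exp.mpr hu_sq)
    _ = 1 := by rw [← Real.exp_add, add_neg_cancel, Real.exp_zero]

end WeightedVar

theorem univ_sup'_mem_Icc {ι : Type*} [Fintype ι] [Nonempty ι] {f : ι → ℝ} {a b : ℝ}
    (hf : ∀ i, f i ∈ Set.Icc a b) : univ.sup' univ_nonempty f ∈ Set.Icc a b :=
  sup'_mem _ (LinearOrder.supClosed _) _ _ _ fun i _ ↦ hf i

namespace MDP

section Value

variable {S A : Type} [Fintype S] [Fintype A] (M : MDP S A)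

theorem P_mem_stdSimplex (h : ℕ) (s : S) (a : A) : M.P h s a ∈ stdSimplex ℝ S :=
  ⟨M.P_nonneg h s a, M.P_sum_one h s a⟩

variable [Nonempty A]

theorem QstarAux_mem_Icc (n h : ℕ) (s : S) (a : A) : M.QstarAux n h s a ∈ Set.Icc 0 (n : ℝ) := by
  induction n generalizing h s a with
  | zero => simp [QstarAux]
  | succ n ih =>
    have hnext := sum_mul_mem_Icc (M.P_mem_stdSimplex h s a) fun s' ↦
      univ_sup'_mem_Icc fun a' ↦ ih (h + 1) s' a'
    rw [QstarAux, Nat.cast_succ, add_comm (n : ℝ)]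
    exact ⟨add_nonneg (M.r_nonneg h s a) hnext.1, add_le_add (M.r_le_one h s a) hnext.2⟩

theorem Vstar_succ_mem_Icc (h : ℕ) (s : S) : M.Vstar (h + 1) s ∈ Set.Icc 0 (M.H : ℝ) :=
  univ_sup'_mem_Icc fun a ↦ Set.Icc_subset_Icc_right
    (Nat.cast_le.mpr (by lia)) (M.QstarAux_mem_Icc _ _ s a)

theorem Qstar_eq {h : ℕ} (hh : h ≤ M.H) (s : S) (a : A) :
    M.Qstar h s a = M.r h s a + ∑ s', M.P h s a s' * M.Vstar (h + 1) s' := by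
  rw [Qstar, show M.H + 1 - h = M.H + 1 - (h + 1) + 1 by lia, QstarAux]
  rfl

theorem sum_P_mul_Vstar_le {h : ℕ} (hh : h ≤ M.H) (s : S) (a : A) :
    ∑ s', M.P h s a s' * M.Vstar (h + 1) s' ≤ M.Vstar h s :=
  calc ∑ s', M.P h s a s' * M.Vstar (h + 1) s'
      ≤ M.Qstar h s a := by
        rw [M.Qstar_eq hh]
        exact le_add_of_nonneg_left (M.r_nonneg h s a)
    _ ≤ M.Vstar h s := le_sup' (fun a ↦ M.Qstar h s a) (mem_univ a)

/-- `Var_{h,s,a}(V⋆_{h+1})`, whose sum along the trajectory is bounded by the potential `sqGap`. -/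
noncomputable def nextVar (h : ℕ) (s : S) (a : A) : ℝ :=
  M.varP h s a fun s' ↦ M.Vstar (h + 1) s'

/-- The potential `(H - V⋆_h(s))²` whose drift dominates the variance `nextVar`. -/
noncomputable def sqGap (h : ℕ) (s : S) : ℝ :=
  ((M.H : ℝ) - M.Vstar h s) ^ 2

/-- The martingale increment `P_{h,s,a} g_{h+1} - g_{h+1}(s')` of the potential `g = sqGap` at a
transition from `(s, a)` to `s'` in step `h`. -/
noncomputable def sqGapIncr (h : ℕ) (s : S) (a : A) (s' : S) : ℝ :=
  ∑ x, M.P h s a x * M.sqGap (h + 1) x - M.sqGap (h + 1) s'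

/-- The factor contributed by a transition from `(s, a)` to `s'` in step `h` to the exponential
supermartingale of the increments `sqGapIncr`, compensated by half of `nextVar`. -/
noncomputable def expIncr (h : ℕ) (s : S) (a : A) (s' : S) : ℝ :=
  Real.exp ((M.sqGapIncr h s a s' - M.nextVar h s a / 2) / (8 * (M.H : ℝ) ^ 2))

theorem nextVar_nonneg (h : ℕ) (s : S) (a : A) : 0 ≤ M.nextVar h s a :=
  weightedVar_nonneg (M.P_mem_stdSimplex h s a) _

theorem nextVar_of_subsingleton [Subsingleton S] (h : ℕ) (s : S) (a : A) :
    M.nextVar h s a = 0 :=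
  weightedVar_of_subsingleton (M.P_sum_one h s a) _

theorem sqGap_succ_mem_Icc (h : ℕ) (s : S) : M.sqGap (h + 1) s ∈ Set.Icc 0 ((M.H : ℝ) ^ 2) := by
  have hV := M.Vstar_succ_mem_Icc h s
  exact ⟨sq_nonneg _, pow_le_pow_left₀ (sub_nonneg.mpr hV.2) (sub_le_self _ hV.1) 2⟩

theorem nextVar_le {h : ℕ} (hh : h + 1 ≤ M.H) (s : S) (a : A) (s' : S) :
    M.nextVar (h + 1) s a
      ≤ M.sqGapIncr (h + 1) s a s' + (M.sqGap (h + 2) s' - M.sqGap (h + 1) s) := by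
  have hdecomp : ∑ x, M.P (h + 1) s a x * M.sqGap (h + 2) x = M.nextVar (h + 1) s a +
      (∑ x, M.P (h + 1) s a x * M.Vstar (h + 2) x - M.H) ^ 2 := by
    simp_rw [sqGap, sub_sq_comm (M.H : ℝ)]
    exact sum_mul_sub_sq_eq_weightedVar_add (M.P_sum_one (h + 1) s a) _ _
  have hmean : M.sqGap (h + 1) s ≤ (∑ x, M.P (h + 1) s a x * M.Vstar (h + 2) x - M.H) ^ 2 := by
    rw [sub_sq_comm]
    have := M.sum_P_mul_Vstar_le hh s a
    exact pow_le_pow_left₀ (sub_nonneg.mpr (M.Vstar_succ_mem_Icc h s).2) (by gcongr) 2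
  rw [sqGapIncr, hdecomp]
  linarith

theorem sum_nextVar_le (s : ℕ → S) (a : ℕ → A) :
    ∑ h ∈ Icc 1 M.H, M.nextVar h (s h) (a h)
      ≤ M.H ^ 2 + ∑ h ∈ Icc 1 M.H, M.sqGapIncr h (s h) (a h) (s (h + 1)) :=
  calc ∑ h ∈ Icc 1 M.H, M.nextVar h (s h) (a h)
      ≤ ∑ h ∈ Icc 1 M.H, (M.sqGapIncr h (s h) (a h) (s (h + 1))
          + (M.sqGap (h + 1) (s (h + 1)) - M.sqGap h (s h))) := by
        refine sum_le_sum fun h hh ↦ ?_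
        obtain ⟨h1, hH⟩ := mem_Icc.mp hh
        obtain ⟨h, rfl⟩ := Nat.exists_eq_add_of_le' h1
        exact M.nextVar_le hH _ _ _
    _ = ∑ h ∈ Icc 1 M.H, M.sqGapIncr h (s h) (a h) (s (h + 1))
          + (M.sqGap (M.H + 1) (s (M.H + 1)) - M.sqGap 1 (s 1)) := by
        rw [sum_add_distrib, sum_Icc_sub M.H_pos fun h ↦ M.sqGap h (s h)]
    _ ≤ M.H ^ 2 + ∑ h ∈ Icc 1 M.H, M.sqGapIncr h (s h) (a h) (s (h + 1)) := by
        linarith [(M.sqGap_succ_mem_Icc M.H (s (M.H + 1))).2, (M.sqGap_succ_mem_Icc 0 (s 1)).1]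

theorem expIncr_pos (h : ℕ) (s : S) (a : A) (s' : S) : 0 < M.expIncr h s a s' :=
  Real.exp_pos _

theorem sum_P_mul_expIncr_le_one (h : ℕ) (s : S) (a : A) :
    ∑ x, M.P h s a x * M.expIncr h s a x ≤ 1 := by
  have := sum_mul_exp_sq_gap_le_one (B := M.H) (M.P_mem_stdSimplex h s a)
    (Nat.cast_pos.mpr M.H_pos) fun x ↦ M.Vstar_succ_mem_Icc h x
  simp only [NNReal.coe_natCast] at this
  exact this

theorem prod_expIncr_eq (K : ℕ) (s : ℕ → ℕ → S) (a : ℕ → ℕ → A) :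
    ∏ k ∈ Icc 1 K, ∏ h ∈ Icc 1 M.H, M.expIncr h (s k h) (a k h) (s k (h + 1)) =
      Real.exp ((∑ k ∈ Icc 1 K, ∑ h ∈ Icc 1 M.H, M.sqGapIncr h (s k h) (a k h) (s k (h + 1))
        - (∑ k ∈ Icc 1 K, ∑ h ∈ Icc 1 M.H, M.nextVar h (s k h) (a k h)) / 2)
          / (8 * (M.H : ℝ) ^ 2)) := by
  simp_rw [expIncr, ← Real.exp_sum, ← sum_div, sum_sub_distrib, ← sum_div]

theorem sum_nextVar_le_of_prod_expIncr_lt {K : ℕ} (s : ℕ → ℕ → S) (a : ℕ → ℕ → A) {x : ℝ}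
    (hx : ∏ k ∈ Icc 1 K, ∏ h ∈ Icc 1 M.H, M.expIncr h (s k h) (a k h) (s k (h + 1)) < x) :
    ∑ k ∈ Icc 1 K, ∑ h ∈ Icc 1 M.H, M.nextVar h (s k h) (a k h)
      ≤ 2 * M.H ^ 2 * K + 16 * M.H ^ 2 * Real.log x := by
  have hH : (0 : ℝ) < M.H := Nat.cast_pos.mpr M.H_pos
  have hdrift := sum_le_sum fun k (_ : k ∈ Icc 1 K) ↦ M.sum_nextVar_le (s k) (a k)
  rw [sum_add_distrib, sum_const, Nat.card_Icc, Nat.add_sub_cancel, nsmul_eq_mul] at hdrift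
  rw [prod_expIncr_eq] at hx
  have hincr := (Real.le_log_iff_exp_le ((Real.exp_pos _).trans hx)).mpr hx.le
  rw [div_le_iff₀ (by positivity)] at hincr
  linarith

end Value

end MDP

section ExponentialSupermartingale

variable {Ω : Type*} {m0 : MeasurableSpace Ω} {μ : Measure Ω}

theorem integral_prod_range_le_one [IsProbabilityMeasure μ] {𝓕 : Filtration ℕ m0}
    {Y : ℕ → Ω → ℝ} {n : ℕ} (hY : ∀ i < n, StronglyMeasurable[𝓕 (i + 1)] (Y i))
    (hY_nonneg : ∀ i ω, 0 ≤ Y i ω) (hY_bdd : ∀ i < n, BddAbove (Set.range (Y i)))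
    (hcond : ∀ i < n, μ[Y i | 𝓕 i] ≤ᵐ[μ] 1) :
    Integrable (fun ω ↦ ∏ i ∈ range n, Y i ω) μ ∧ ∫ ω, ∏ i ∈ range n, Y i ω ∂μ ≤ 1 := by
  induction n with
  | zero => simp
  | succ n ih =>
    obtain ⟨hint, hle⟩ := ih (fun i hi ↦ hY i (by lia)) (fun i hi ↦ hY_bdd i (by lia))
      fun i hi ↦ hcond i (by lia)
    set L : Ω → ℝ := fun ω ↦ ∏ i ∈ range n, Y i ω
    have hL_nonneg : ∀ ω, 0 ≤ L ω := fun ω ↦ prod_nonneg fun i _ ↦ hY_nonneg i ω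
    have hL : StronglyMeasurable[𝓕 n] L := stronglyMeasurable_fun_prod _ fun i hi ↦
      (hY i (by grind)).mono (𝓕.mono (by grind))
    have hYn : AEStronglyMeasurable (Y n) μ :=
      ((hY n (by lia)).mono (𝓕.le _)).aestronglyMeasurable
    obtain ⟨C, hC⟩ := hY_bdd n (by lia)
    have hYC : ∀ᵐ ω ∂μ, ‖Y n ω‖ ≤ C := .of_forall fun ω ↦ by
      rw [Real.norm_of_nonneg (hY_nonneg n ω)]
      exact hC ⟨ω, rfl⟩
    have hprod : Integrable (L * Y n) μ := hint.mul_bdd hYn hYC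
    simp_rw [prod_range_succ]
    refine ⟨hprod, ?_⟩
    calc ∫ ω, (L * Y n) ω ∂μ = ∫ ω, μ[L * Y n | 𝓕 n] ω ∂μ := (integral_condExp (𝓕.le n)).symm
      _ ≤ ∫ ω, L ω ∂μ := by
          refine integral_mono_ae integrable_condExp hint ?_
          filter_upwards [condExp_mul_of_stronglyMeasurable_left hL hprod
            (.of_bound hYn C hYC), hcond n (by lia)] with ω hpull hω
          rw [hpull]
          exact mul_le_of_le_one_right (hL_nonneg ω) hω
      _ ≤ 1 := hle

theorem one_sub_le_measureReal_lt_inv [IsProbabilityMeasure μ] {L : Ω → ℝ}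
    (hL : Integrable L μ) (hL_nonneg : 0 ≤ᵐ[μ] L) (hL_le : ∫ ω, L ω ∂μ ≤ 1) {δ : ℝ} (hδ : 0 < δ) :
    1 - δ ≤ μ.real {ω | L ω < δ⁻¹} := by
  have hmarkov : μ.real {ω | δ⁻¹ ≤ L ω} ≤ δ := by
    have := (mul_meas_ge_le_integral_of_nonneg hL_nonneg hL δ⁻¹).trans hL_le
    rwa [inv_mul_le_iff₀ hδ, mul_one] at this
  have hcompl : {ω | L ω < δ⁻¹} = {ω | δ⁻¹ ≤ L ω}ᶜ := by ext; simp
  rw [hcompl, measureReal_compl₀ (nullMeasurableSet_le aemeasurable_const hL.aemeasurable),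
    probReal_univ]
  linarith

end ExponentialSupermartingale

theorem condExp_comp_of_finite {Ω X Y : Type*} [Fintype X] [DecidableEq X] [Finite Y]
    [MeasurableSpace X] [MeasurableSingletonClass X]
    [MeasurableSpace Y] [MeasurableSingletonClass Y] {m m0 : MeasurableSpace Ω} {μ : Measure Ω}
    [IsFiniteMeasure μ] (hm : m ≤ m0) {Z : Ω → X} (hZ : Measurable Z) {W : Ω → Y}
    (hW : Measurable[m] W) {p : X → Ω → ℝ}
    (hp : ∀ x, μ[fun ω ↦ if Z ω = x then (1 : ℝ) else 0 | m] =ᵐ[μ] p x) (f : Y → X → ℝ) :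
    μ[fun ω ↦ f (W ω) (Z ω) | m] =ᵐ[μ] fun ω ↦ ∑ x, p x ω * f (W ω) x := by
  set ind : X → Ω → ℝ := fun x ω ↦ if Z ω = x then 1 else 0
  set g : X → Ω → ℝ := fun x ω ↦ f (W ω) x
  have hind : ∀ x, Integrable (ind x) μ := fun x ↦
    .of_bound (Measurable.ite (hZ (measurableSet_singleton x)) measurable_const
      measurable_const).aestronglyMeasurable 1 (.of_forall fun ω ↦ by
        simp only [ind]; split_ifs <;> simp)
  have hg : ∀ x, StronglyMeasurable[m] (g x) := fun x ↦
    ((measurable_of_finite fun y ↦ f y x).comp hW).stronglyMeasurable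
  have hprod : ∀ x, Integrable (ind x * g x) μ := fun x ↦ by
    obtain ⟨C, hC⟩ := Finite.exists_le fun y ↦ ‖f y x‖
    exact (hind x).mul_bdd ((hg x).mono hm).aestronglyMeasurable (.of_forall fun ω ↦ hC (W ω))
  have hsplit : (fun ω ↦ f (W ω) (Z ω)) = ∑ x, ind x * g x := by
    ext ω
    simp [ind, g]
  rw [hsplit]
  refine (condExp_finsetSum (fun x _ ↦ hprod x) m).trans ?_
  have hpull := fun x ↦ condExp_mul_of_stronglyMeasurable_right (hg x) (hprod x) (hind x)
  filter_upwards [ae_all_iff.mpr hp, ae_all_iff.mpr hpull] with ω hpω hω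
  rw [Finset.sum_apply]
  exact sum_congr rfl fun x _ ↦ by rw [hω x, Pi.mul_apply, hpω x]

theorem prod_Icc_one_eq_prod_range {N : Type*} [CommMonoid N] (f : ℕ → N) (n : ℕ) :
    ∏ i ∈ Icc 1 n, f i = ∏ i ∈ range n, f (i + 1) := by
  rw [range_eq_Ico, prod_Ico_add' f 0 n 1]
  rfl

theorem prod_range_mul_eq_prod_Icc_prod_Icc {N : Type*} [CommMonoid N] {n : ℕ} (hn : 0 < n)
    (f : ℕ → ℕ → N) (m : ℕ) :
    ∏ i ∈ range (m * n), f (i / n + 1) (i % n + 1) = ∏ k ∈ Icc 1 m, ∏ h ∈ Icc 1 n, f k h := by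
  induction m with
  | zero => simp
  | succ m ih =>
    rw [prod_Icc_succ_top (by lia), ← ih, add_mul, one_mul, prod_range_add,
      prod_Icc_one_eq_prod_range]
    congr 1
    refine prod_congr rfl fun i hi ↦ ?_
    rw [Nat.mul_add_mod_of_lt (mem_range.mp hi)]
    rw [Nat.mul_comm, Nat.mul_add_div hn, Nat.div_eq_of_lt (mem_range.mp hi), add_zero]

namespace IsMDPTrajectory

variable {S A Ω : Type} [Fintype S] [Fintype A] [DecidableEq S] [MeasurableSpace S]
  [MeasurableSpace A] {m0 : MeasurableSpace Ω} {μ : Measure Ω} {M : MDP S A} {K : ℕ}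
  {𝓕 : Filtration ℕ m0} {st : ℕ → ℕ → Ω → S} {ac : ℕ → ℕ → Ω → A} {k h : ℕ}

theorem measurable_state_action (hT : IsMDPTrajectory μ M K 𝓕 st ac) (hk : k ∈ Icc 1 K)
    (hh : h ∈ Icc 1 M.H) :
    Measurable[𝓕 ((k - 1) * M.H + h)] fun ω ↦ (st k h ω, ac k h ω) :=
  (hT.1 k hk h (Icc_subset_Icc_right (by lia) hh)).prodMk (hT.2.1 k hk h hh)

theorem measurable_next_state (hT : IsMDPTrajectory μ M K 𝓕 st ac) (hk : k ∈ Icc 1 K)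
    (hh : h ∈ Icc 1 M.H) : Measurable[𝓕 ((k - 1) * M.H + h + 1)] (st k (h + 1)) :=
  hT.1 k hk (h + 1) (by grind)

variable [MeasurableSingletonClass S] [MeasurableSingletonClass A]

theorem measurable_comp_transition (hT : IsMDPTrajectory μ M K 𝓕 st ac) (hk : k ∈ Icc 1 K)
    (hh : h ∈ Icc 1 M.H) (f : S → A → S → ℝ) :
    Measurable[𝓕 ((k - 1) * M.H + h + 1)]
      fun ω ↦ f (st k h ω) (ac k h ω) (st k (h + 1) ω) :=
  (measurable_of_finite fun x : (S × A) × S ↦ f x.1.1 x.1.2 x.2).comp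
    (((hT.measurable_state_action hk hh).mono (𝓕.mono (Nat.le_succ _)) le_rfl).prodMk
      (hT.measurable_next_state hk hh))

theorem condExp_comp_transition [IsFiniteMeasure μ] (hT : IsMDPTrajectory μ M K 𝓕 st ac)
    (hk : k ∈ Icc 1 K) (hh : h ∈ Icc 1 M.H) (f : S → A → S → ℝ) :
    μ[fun ω ↦ f (st k h ω) (ac k h ω) (st k (h + 1) ω) | 𝓕 ((k - 1) * M.H + h)] =ᵐ[μ]
      fun ω ↦ ∑ s', M.P h (st k h ω) (ac k h ω) s' * f (st k h ω) (ac k h ω) s' :=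
  condExp_comp_of_finite (𝓕.le _)
    ((hT.measurable_next_state hk hh).mono (𝓕.le _) le_rfl) (hT.measurable_state_action hk hh)
    (hT.2.2 k hk h hh) fun x s' ↦ f x.1 x.2 s'

/-- Step `h` of episode `k` is the step number `i = (k - 1) * H + (h - 1)` of the whole run. -/
theorem integral_prod_comp_transition_le_one [IsProbabilityMeasure μ]
    (hT : IsMDPTrajectory μ M K 𝓕 st ac) {f : ℕ → S → A → S → ℝ}
    (hf : ∀ h s a s', 0 ≤ f h s a s') (hPf : ∀ h s a, ∑ s', M.P h s a s' * f h s a s' ≤ 1) :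
    let L := fun ω ↦ ∏ k ∈ Icc 1 K, ∏ h ∈ Icc 1 M.H, f h (st k h ω) (ac k h ω) (st k (h + 1) ω)
    Integrable L μ ∧ ∫ ω, L ω ∂μ ≤ 1 := by
  have hH : 0 < M.H := M.H_pos
  have hk : ∀ i < K * M.H, i / M.H + 1 ∈ Icc 1 K := fun i hi ↦
    mem_Icc.mpr ⟨Nat.le_add_left _ _, Nat.div_lt_of_lt_mul (by rwa [mul_comm])⟩
  have hh : ∀ i, i % M.H + 1 ∈ Icc 1 M.H := fun i ↦
    mem_Icc.mpr ⟨Nat.le_add_left _ _, Nat.mod_lt i hH⟩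
  have htime : ∀ i, (i / M.H + 1 - 1) * M.H + (i % M.H + 1) = i + 1 := fun i ↦ by
    rw [Nat.add_sub_cancel, ← add_assoc, Nat.div_add_mod']
  let 𝓖 : Filtration ℕ m0 := ⟨fun i ↦ 𝓕 (i + 1), fun i j hij ↦ 𝓕.mono (by lia), fun i ↦ 𝓕.le _⟩
  let Y : ℕ → Ω → ℝ := fun i ω ↦ f (i % M.H + 1) (st (i / M.H + 1) (i % M.H + 1) ω)
    (ac (i / M.H + 1) (i % M.H + 1) ω) (st (i / M.H + 1) (i % M.H + 1 + 1) ω)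
  have hY : ∀ i < K * M.H, StronglyMeasurable[𝓖 (i + 1)] (Y i) := fun i hi ↦ by
    have := hT.measurable_comp_transition (hk i hi) (hh i) (f (i % M.H + 1))
    rw [htime] at this
    exact this.stronglyMeasurable
  have hY_bdd : ∀ i, BddAbove (Set.range (Y i)) := fun i ↦ by
    have hfin := Set.finite_range fun x : S × A × S ↦ f (i % M.H + 1) x.1 x.2.1 x.2.2
    refine hfin.bddAbove.mono ?_
    rintro _ ⟨ω, rfl⟩
    exact ⟨(_, _, _), rfl⟩
  have hcond : ∀ i < K * M.H, μ[Y i | 𝓖 i] ≤ᵐ[μ] 1 := fun i hi ↦ by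
    have := hT.condExp_comp_transition (hk i hi) (hh i) (f (i % M.H + 1))
    rw [htime] at this
    exact this.trans_le (.of_forall fun ω ↦ hPf _ _ _)
  have := integral_prod_range_le_one hY (fun i ω ↦ hf _ _ _ _) (fun i _ ↦ hY_bdd i) hcond
  have hflat : ∀ ω, ∏ i ∈ range (K * M.H), Y i ω = ∏ k ∈ Icc 1 K, ∏ h ∈ Icc 1 M.H,
      f h (st k h ω) (ac k h ω) (st k (h + 1) ω) := fun ω ↦
    prod_range_mul_eq_prod_Icc_prod_Icc hH
      (fun k h ↦ f h (st k h ω) (ac k h ω) (st k (h + 1) ω)) K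
  simp_rw [hflat] at this
  exact this

theorem one_sub_le_measureReal_sum_nextVar_le [Nonempty A] [IsProbabilityMeasure μ]
    (hT : IsMDPTrajectory μ M K 𝓕 st ac) {δ : ℝ} (hδ : 0 < δ) :
    1 - δ ≤ μ.real {ω | ∑ k ∈ Icc 1 K, ∑ h ∈ Icc 1 M.H, M.nextVar h (st k h ω) (ac k h ω)
      ≤ 2 * M.H ^ 2 * K + 16 * M.H ^ 2 * Real.log δ⁻¹} := by
  obtain ⟨hint, hle⟩ := hT.integral_prod_comp_transition_le_one
    (fun h s a s' ↦ (M.expIncr_pos h s a s').le) M.sum_P_mul_expIncr_le_one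
  refine (one_sub_le_measureReal_lt_inv hint (.of_forall fun ω ↦ ?_) hle hδ).trans
    (measureReal_mono fun ω hω ↦ ?_)
  · exact prod_nonneg fun k _ ↦ prod_nonneg fun h _ ↦ (M.expIncr_pos _ _ _ _).le
  · exact M.sum_nextVar_le_of_prod_expIncr_lt (fun k h ↦ st k h ω) (fun k h ↦ ac k h ω) hω

end IsMDPTrajectory

/-- The number of indices `1 ≤ k ≤ n` at which the sequence `x` takes the value `y`; the counter
`N_h^n(s, a)` is the case of the sequence of state-action pairs at step `h`. -/
def visitCount {X : Type*} [DecidableEq X] (x : ℕ → X) (n : ℕ) (y : X) : ℕ :=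
  #{k ∈ Icc 1 n | x k = y}

section VisitCount

variable {X : Type*} [DecidableEq X] (x : ℕ → X) (n : ℕ)

theorem visitCount_zero (y : X) : visitCount x 0 y = 0 := by
  simp [visitCount]

theorem visitCount_succ (y : X) :
    visitCount x (n + 1) y = visitCount x n y + if x (n + 1) = y then 1 else 0 := by
  rw [visitCount, card_filter, sum_Icc_succ_top (by lia), ← card_filter, visitCount]

theorem visitCount_le (y : X) : visitCount x n y ≤ n :=
  (card_filter_le _ _).trans (by simp)

variable [Fintype X]

/-- Successive visits of a point contribute `1, 1/2, 1/3, …`. -/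
theorem sum_inv_visitCount :
    ∑ k ∈ Icc 1 n, (visitCount x k (x k) : ℚ)⁻¹ = ∑ y, harmonic (visitCount x n y) := by
  induction n with
  | zero => simp [visitCount_zero]
  | succ n ih =>
    have hstep : ∀ y, harmonic (visitCount x (n + 1) y) = harmonic (visitCount x n y) +
        if x (n + 1) = y then (visitCount x (n + 1) y : ℚ)⁻¹ else 0 := fun y ↦ by
      rw [visitCount_succ]
      split_ifs
      · exact harmonic_succ _
      · rw [add_zero, add_zero]
    simp_rw [sum_Icc_succ_top (Nat.le_add_left 1 n), ih, hstep, sum_add_distrib, sum_ite_eq,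
      mem_univ, if_true]

theorem sum_inv_visitCount_le :
    ∑ k ∈ Icc 1 n, (visitCount x k (x k) : ℝ)⁻¹ ≤ Fintype.card X * (1 + Real.log n) := by
  have hharmonic : ∀ y, (harmonic (visitCount x n y) : ℝ) ≤ 1 + Real.log n := fun y ↦ by
    obtain h0 | hpos := (visitCount x n y).eq_zero_or_pos
    · rw [h0, harmonic_zero, Rat.cast_zero]
      linarith [Real.log_natCast_nonneg n]
    · refine (harmonic_le_one_add_log _).trans ?_
      gcongr
      exact visitCount_le x n y
  calc ∑ k ∈ Icc 1 n, (visitCount x k (x k) : ℝ)⁻¹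
      = ∑ y, (harmonic (visitCount x n y) : ℝ) := by
        simpa using congrArg ((↑) : ℚ → ℝ) (sum_inv_visitCount x n)
    _ ≤ ∑ _y : X, (1 + Real.log n) := sum_le_sum fun y _ ↦ hharmonic y
    _ = Fintype.card X * (1 + Real.log n) := by simp [mul_add]

end VisitCount

theorem sum_sqrt_div_le_sqrt_mul_sqrt {ι : Type*} (s : Finset ι) {f g : ι → ℝ}
    (hf : ∀ i, 0 ≤ f i) (hg : ∀ i, 0 ≤ g i) :
    ∑ i ∈ s, √(f i / g i) ≤ √(∑ i ∈ s, f i) * √(∑ i ∈ s, (g i)⁻¹) := by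
  simp_rw [div_eq_mul_inv, Real.sqrt_mul (hf _)]
  exact Real.sum_sqrt_mul_sqrt_le s hf fun i ↦ inv_nonneg.mpr (hg i)

section Iota

variable (S A : Type) [Fintype S] [Fintype A] [Nonempty A] {K H : ℕ} {δ : ℝ}

theorem log_inv_le_iota [Nonempty S] (hK : 1 ≤ K) (hH : 1 ≤ H) (hδ : 0 < δ) :
    Real.log δ⁻¹ ≤ iota S A K H δ := by
  have hcard : 1 ≤ Fintype.card S * Fintype.card A * (K * H) :=
    one_le_mul (one_le_mul Fintype.card_pos Fintype.card_pos) (one_le_mul hK hH)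
  rw [iota, inv_eq_one_div]
  gcongr
  exact_mod_cast hcard

theorem iota_nonneg [Nonempty S] (hK : 1 ≤ K) (hH : 1 ≤ H) (hδ : 0 < δ) (hδ1 : δ ≤ 1) :
    0 ≤ iota S A K H δ :=
  (Real.log_nonneg ((one_le_inv₀ hδ).mpr hδ1)).trans (log_inv_le_iota S A hK hH hδ)

theorem one_add_log_le_two_mul_iota [Nontrivial S] (hK : 1 ≤ K) (hH : 1 ≤ H) (hδ : 0 < δ)
    (hδ1 : δ ≤ 1) : 1 + Real.log K ≤ 2 * iota S A K H δ := by
  have hcard : 2 * K ≤ Fintype.card S * Fintype.card A * (K * H) :=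
    Nat.mul_le_mul (Nat.mul_le_mul Fintype.one_lt_card Fintype.card_pos)
      (Nat.le_mul_of_pos_right _ hH)
  have hlog : Real.log (2 * K) ≤ iota S A K H δ := by
    rw [iota]
    gcongr
    rw [le_div_iff₀ hδ]
    exact (mul_le_of_le_one_right (by positivity) hδ1).trans (mod_cast hcard)
  rw [Real.log_mul two_ne_zero (by positivity)] at hlog
  linarith [Real.log_two_gt_d9, Real.log_natCast_nonneg K]

end Iota

theorem sqrt_mul_sqrt_le_six_mul {H K d ι : ℝ} (hH : 1 ≤ H) (hK : 0 ≤ K) (hd : 1 ≤ d)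
    (hι : 0 ≤ ι) :
    √(2 * H ^ 2 * K + 16 * H ^ 2 * ι) * √(H * (d * (2 * ι)))
      ≤ 6 * (√(H ^ 2 * d * (K * H) * ι) + H ^ 4 * d * ι) := by
  set x := H ^ 2 * d * (K * H) * ι
  set y := H ^ 4 * d * ι
  have hx : 0 ≤ x := by positivity
  have hy : 0 ≤ y := by positivity
  have hlower : H ^ 3 * d * ι ^ 2 ≤ y ^ 2 := calc
    H ^ 3 * d * ι ^ 2 ≤ H ^ 8 * d ^ 2 * ι ^ 2 := by
        gcongr
        exacts [by norm_num, le_self_pow₀ hd two_ne_zero]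
    _ = y ^ 2 := by ring
  calc √(2 * H ^ 2 * K + 16 * H ^ 2 * ι) * √(H * (d * (2 * ι)))
      = √(4 * x + 32 * (H ^ 3 * d * ι ^ 2)) := by
        rw [← Real.sqrt_mul (by positivity)]
        congr 1
        ring
    _ ≤ √((6 * (√x + y)) ^ 2) := by
        gcongr
        nlinarith [Real.sq_sqrt hx, mul_nonneg (Real.sqrt_nonneg x) hy]
    _ = 6 * (√x + y) := Real.sqrt_sq (by positivity)

namespace MDP

section AggregateBound

variable {S A : Type} [Fintype S] [Fintype A] [DecidableEq S] [DecidableEq A] [Nonempty A]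
  (M : MDP S A) (s : ℕ → ℕ → S) (a : ℕ → ℕ → A)

theorem sum_sqrt_nextVar_div_visitCount_le_sqrt_mul_sqrt (K : ℕ) :
    ∑ h ∈ Icc 1 M.H, ∑ k ∈ Icc 1 K, √(M.nextVar h (s k h) (a k h) /
        visitCount (fun j ↦ (s j h, a j h)) k (s k h, a k h))
      ≤ √(∑ k ∈ Icc 1 K, ∑ h ∈ Icc 1 M.H, M.nextVar h (s k h) (a k h)) *
        √(M.H * (Fintype.card S * Fintype.card A * (1 + Real.log K))) := by
  have hcount : ∑ h ∈ Icc 1 M.H, ∑ k ∈ Icc 1 K,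
      (visitCount (fun j ↦ (s j h, a j h)) k (s k h, a k h) : ℝ)⁻¹
        ≤ M.H * (Fintype.card S * Fintype.card A * (1 + Real.log K)) := by
    refine (sum_le_card_nsmul _ _ _ fun h _ ↦
      sum_inv_visitCount_le (fun j ↦ (s j h, a j h)) K).trans_eq ?_
    simp
  rw [sum_comm (s := Icc 1 K)]
  refine le_trans ?_ (mul_le_mul_of_nonneg_left (Real.sqrt_le_sqrt hcount) (Real.sqrt_nonneg _))
  simp_rw [← sum_product']
  exact sum_sqrt_div_le_sqrt_mul_sqrt _ (fun _ ↦ M.nextVar_nonneg _ _ _) fun _ ↦ Nat.cast_nonneg _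

theorem sum_sqrt_nextVar_div_visitCount_le [Nonempty S] {K : ℕ} (hK : 1 ≤ K) {δ : ℝ} (hδ : 0 < δ)
    (hδ1 : δ ≤ 1)
    (hvar : ∑ k ∈ Icc 1 K, ∑ h ∈ Icc 1 M.H, M.nextVar h (s k h) (a k h)
      ≤ 2 * M.H ^ 2 * K + 16 * M.H ^ 2 * Real.log δ⁻¹) :
    ∑ h ∈ Icc 1 M.H, ∑ k ∈ Icc 1 K, √(M.nextVar h (s k h) (a k h) /
        visitCount (fun j ↦ (s j h, a j h)) k (s k h, a k h))
      ≤ 6 * (√(M.H ^ 2 * Fintype.card S * Fintype.card A * (K * M.H) * iota S A K M.H δ)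
        + M.H ^ 4 * Fintype.card S * Fintype.card A * iota S A K M.H δ) := by
  set ι := iota S A K M.H δ
  have hι : 0 ≤ ι := iota_nonneg S A hK M.H_pos hδ hδ1
  obtain hS | hS := subsingleton_or_nontrivial S
  · simp only [M.nextVar_of_subsingleton, zero_div, Real.sqrt_zero, sum_const_zero]
    positivity
  have hd : (1 : ℝ) ≤ Fintype.card S * Fintype.card A :=
    mod_cast one_le_mul (Fintype.card_pos (α := S)) (Fintype.card_pos (α := A))
  calc _ ≤ _ := M.sum_sqrt_nextVar_div_visitCount_le_sqrt_mul_sqrt s a K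
    _ ≤ √(2 * M.H ^ 2 * K + 16 * M.H ^ 2 * ι) *
          √(M.H * (Fintype.card S * Fintype.card A * (2 * ι))) := by
        gcongr
        · refine hvar.trans ?_
          gcongr
          exact log_inv_le_iota S A hK M.H_pos hδ
        · exact one_add_log_le_two_mul_iota S A hK M.H_pos hδ hδ1
    _ ≤ _ := by
        simpa only [mul_assoc] using
          sqrt_mul_sqrt_le_six_mul (Nat.one_le_cast.mpr M.H_pos) K.cast_nonneg hd hι

end AggregateBound

end MDP

theorem QLAlg.N_eq_visitCount {S A : Type} [Fintype S] [Fintype A] [Nonempty S] [Nonempty A]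
    [DecidableEq S] [DecidableEq A] {M : MDP S A} {K : ℕ} {cb δ : ℝ} (alg : QLAlg M K cb δ)
    {k h : ℕ} (hk : k ≤ K) (hh : h ∈ Icc 1 M.H) (s : S) (a : A) :
    alg.N k h s a = visitCount (fun j ↦ (alg.st j h, alg.ac j h)) k (s, a) := by
  induction k with
  | zero => rw [alg.N_init, visitCount_zero]
  | succ k ih =>
    rw [alg.N_upd (k + 1) (mem_Icc.mpr ⟨by lia, hk⟩) h hh, Nat.add_sub_cancel, ih (by lia),
      visitCount_succ]
    simp only [Prod.mk.injEq, eq_comm]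

theorem QLAlg.sum_sqrt_varP_div_N_eq {S A : Type} [Fintype S] [Fintype A] [Nonempty S] [Nonempty A]
    [DecidableEq S] [DecidableEq A] {M : MDP S A} {K : ℕ} {cb δ : ℝ} (alg : QLAlg M K cb δ) :
    ∑ h ∈ Icc 1 M.H, ∑ k ∈ Icc 1 K,
        √(M.varP h (alg.st k h) (alg.ac k h) (fun s' ↦ M.Vstar (h + 1) s')
          / alg.N k h (alg.st k h) (alg.ac k h)) =
      ∑ h ∈ Icc 1 M.H, ∑ k ∈ Icc 1 K, √(M.nextVar h (alg.st k h) (alg.ac k h) /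
        visitCount (fun j ↦ (alg.st j h, alg.ac j h)) k (alg.st k h, alg.ac k h)) :=
  sum_congr rfl fun h hh ↦ sum_congr rfl fun k hk ↦ by
    rw [alg.N_eq_visitCount (mem_Icc.mp hk).2 hh, MDP.nextVar]

theorem aggregate_variance_bound_of_QEarlySettledAdvantage_general {S A : Type}
    [Fintype S] [Fintype A] [Nonempty S] [Nonempty A] [DecidableEq S] [DecidableEq A]
    [MeasurableSpace S] [MeasurableSingletonClass S]
    [MeasurableSpace A] [MeasurableSingletonClass A] {M : MDP S A} {K : ℕ} {δ : ℝ}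
    {Ω : Type} {m0 : MeasurableSpace Ω} {μ : Measure Ω} [IsProbabilityMeasure μ]
    {𝓕 : Filtration ℕ m0} {st : ℕ → ℕ → Ω → S} {ac : ℕ → ℕ → Ω → A}
    (hδ : 0 < δ) (hδ1 : δ ≤ 1) (hK : 1 ≤ K) (hT : IsMDPTrajectory μ M K 𝓕 st ac) :
    1 - δ ≤ μ.real {ω |
      ∑ h ∈ Icc 1 M.H, ∑ k ∈ Icc 1 K, √(M.nextVar h (st k h ω) (ac k h ω) /
          visitCount (fun j ↦ (st j h ω, ac j h ω)) k (st k h ω, ac k h ω))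
        ≤ 6 * (√(M.H ^ 2 * Fintype.card S * Fintype.card A * (K * M.H) * iota S A K M.H δ)
          + M.H ^ 4 * Fintype.card S * Fintype.card A * iota S A K M.H δ)} :=
  (hT.one_sub_le_measureReal_sum_nextVar_le hδ).trans <| measureReal_mono fun ω hω ↦
    M.sum_sqrt_nextVar_div_visitCount_le (fun k h ↦ st k h ω) (fun k h ↦ ac k h ω) hK hδ hδ1 hω

/-- **Aggregate optimal-value variance bound** (eq. (106) of the paper).
There is a universal constant `C > 0` such that for any MDP, any `δ ∈ (0,1)`, any
bonus constant `cb > 0`, with probability at least `1 - δ` over the trajectories of the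
Q-EarlySettled-Advantage algorithm,
`∑_{h=1}^H ∑_{k=1}^K √(Var_{h,s_h^k,a_h^k}(V⋆_{h+1}) / N_h^k(s_h^k,a_h^k))
  ≤ C (√(H² S A T log(SAT/δ)) + H⁴ S A log(SAT/δ))` with `T = KH`. -/
theorem aggregate_variance_bound_of_QEarlySettledAdvantage :
    ∃ C : ℝ, 0 < C ∧
      ∀ (S A : Type) [Fintype S] [Fintype A] [Nonempty S] [Nonempty A]
        [DecidableEq S] [DecidableEq A]
        [MeasurableSpace S] [MeasurableSingletonClass S]
        [MeasurableSpace A] [MeasurableSingletonClass A]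
        (M : MDP S A) (K : ℕ) (cb δ : ℝ)
        (Ω : Type) (m0 : MeasurableSpace Ω) (μ : Measure Ω)
        (𝓕 : Filtration ℕ m0) (alg : Ω → QLAlg M K cb δ),
        IsProbabilityMeasure μ → 0 < δ → δ < 1 → 1 ≤ K → 0 < cb →
        IsMDPTrajectory μ M K 𝓕 (fun k h ω => (alg ω).st k h)
          (fun k h ω => (alg ω).ac k h) →
        1 - δ ≤ (μ {ω |
            ∑ h ∈ Icc 1 M.H, ∑ k ∈ Icc 1 K,
                Real.sqrt (M.varP h ((alg ω).st k h) ((alg ω).ac k h)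
                    (fun s' => M.Vstar (h + 1) s')
                  / ((alg ω).N k h ((alg ω).st k h) ((alg ω).ac k h) : ℝ))
              ≤ C * (Real.sqrt ((M.H : ℝ) ^ 2 * (Fintype.card S) * (Fintype.card A)
                      * (K * M.H) * iota S A K M.H δ)
                  + (M.H : ℝ) ^ 4 * (Fintype.card S) * (Fintype.card A)
                      * iota S A K M.H δ)}).toReal := by
  refine ⟨6, by norm_num, fun S A _ _ _ _ _ _ _ _ _ _ M K cb δ Ω m0 μ 𝓕 alg _ hδ hδ1 hK _ hT ↦ ?_⟩
  simp_rw [QLAlg.sum_sqrt_varP_div_N_eq]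
  exact aggregate_variance_bound_of_QEarlySettledAdvantage_general hδ hδ1.le hK hT
end
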